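/- Fix integers m ≥ 1 and n ≥ 1. The number of labelled m-Tamari intervals of size n equals (m+1)^n (mn+1)^{n−2}, the equality being understood in ℚ (for n = 1 the right-hand side equals 1). -/

import Mathlib

/-- A step of a lattice path: north or east. -/
inductive Step : Type
  | N : Step
  | E : Step
deriving DecidableEq

/-- Number of north steps of a path. -/
def northCount (w : List Step) : ℕ := (w.filter (fun s => s = Step.N)).length

/-- Number of east steps of a path. -/
def eastCount (w : List Step) : ℕ := (w.filter (fun s => s = Step.E)).length

/-- `w` is an `m`-ballot path: it never goes below the line `x = m y`, and ends on it. -/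
def IsBallot (m : ℕ) (w : List Step) : Prop :=
  (∀ k, eastCount (w.take k) ≤ m * northCount (w.take k)) ∧
    eastCount w = m * northCount w

/-- The covering relation of the `m`-Tamari order: `Q` covers `P` when `P` contains an
east step immediately followed by a north step `b`, and `Q` is obtained from `P` by
swapping the east step and `S`, where `S` is the shortest factor of `P` beginning with
`b` that is a (translated) `m`-ballot path. -/
def TamariCovers (m : ℕ) (P Q : List Step) : Prop :=
  ∃ w₁ S w₂ : List Step,
    S ≠ [] ∧ S.head? = some Step.N ∧ IsBallot m S ∧
    (∀ k, 0 < k → k < S.length → ¬ IsBallot m (S.take k)) ∧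
    P = w₁ ++ Step.E :: (S ++ w₂) ∧ Q = w₁ ++ S ++ Step.E :: w₂

/-- The `m`-Tamari order (reflexive–transitive closure of the covering relation). -/
def TamariLE (m : ℕ) : List Step → List Step → Prop :=
  Relation.ReflTransGen (TamariCovers m)

/-- `lab` is a labelling of the `n` north steps of `Q` by `1, …, n` (here, bijectively by
`Fin n`), increasing along each ascent: `lab i` is the position in `Q` of the north step
labelled `i`. -/
def IsLabelling (n : ℕ) (Q : List Step) (lab : Fin n → ℕ) : Prop :=
  Function.Injective lab ∧ (∀ i, Q[lab i]? = some Step.N) ∧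
    (∀ i j : Fin n, lab j = lab i + 1 → i < j)

/-- A labelled `m`-Tamari interval of size `n`: a pair of `m`-ballot paths of size `n`
with `P ≤ Q` in the `m`-Tamari order, together with a labelling of `Q`. -/
def IsLabelledTamariInterval (m n : ℕ)
    (x : (List Step × List Step) × (Fin n → ℕ)) : Prop :=
  IsBallot m x.1.1 ∧ northCount x.1.1 = n ∧
    IsBallot m x.1.2 ∧ northCount x.1.2 = n ∧
    TamariLE m x.1.1 x.1.2 ∧ IsLabelling n x.1.2 x.2

/-- The cycles of a permutation, as the quotient by the `SameCycle` relation. -/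
def Cycles {n : ℕ} (σ : Equiv.Perm (Fin n)) : Type :=
  Quotient (Equiv.Perm.SameCycle.setoid σ)

/-- The number of cycles of a permutation (fixed points count as cycles). -/
noncomputable def numCycles {n : ℕ} (σ : Equiv.Perm (Fin n)) : ℕ :=
  Nat.card (Cycles σ)

/-- The length of a cycle of a permutation. -/
noncomputable def cycleLen {n : ℕ} (σ : Equiv.Perm (Fin n)) (c : Cycles σ) : ℕ :=
  Nat.card {i : Fin n // Quotient.mk (Equiv.Perm.SameCycle.setoid σ) i = c}

/-- Positions `a` and `b` belong to the same ascent (maximal run of north steps) of `Q`. -/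
def SameAscent (Q : List Step) (a b : ℕ) : Prop :=
  ∀ r, min a b ≤ r → r ≤ max a b → Q[r]? = some Step.N

/-- A labelled interval is fixed by `σ` exactly when every cycle of `σ` is contained in
the label set of a single ascent of the upper path. -/
def FixedBy {n : ℕ} (x : (List Step × List Step) × (Fin n → ℕ))
    (σ : Equiv.Perm (Fin n)) : Prop :=
  ∀ i j : Fin n, σ.SameCycle i j → SameAscent x.1.2 (x.2 i) (x.2 j)

/-!
Attach to an interval `P ≤ Q` the monomial `t ^ n * x ^ c`, where `c` is the number of contacts of
`P` with the line `{x = m y}`, and the weight `∏ 1 / a!` over the lengths `a` of the ascents of `Q`.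
An upper path has `n! * ∏ 1 / a!` labellings, so the generating series `F(t, x)` of these weights
is, at `x = 1`, the exponential generating series of the labelled intervals. Cutting `Q` at its
first visit to each height, and `P` at any of its contacts, gives an equation for `F` that iterates
the operator `G(x) ↦ F(x) (G(x) - G(1)) / (x - 1)`, and so involves unknown series at `x = 1`.

Put `t = z e ^ (-m (m + 1) z)` and `x = w e ^ (-m (w - 1) z)`. Let `w = 1 / (1 - y)`, where `y` runs
over the `m + 1` roots of `Y ^ (m + 1) - Y ^ m + u`. The divided difference at the `m + 1` values of
`(x - 1) / F` kills the unknown series. An explicit series in `z` and `w` satisfies the resulting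
equations, and it is the only one: if two solutions first differ in the coefficient of `z ^ N`,
which is a polynomial in `w` vanishing at `0`, then the divided difference of that polynomial at the
roots `y` is zero for every `u`, which is possible only for the zero polynomial. At `w = 1` this
solution is `∑ (m + 1) ^ n (m n + 1) ^ (n - 2) t ^ n / n!`, because a finite difference of order
`N` kills polynomials of degree less than `N`.
-/

section Paths

/-- The height reached by a path that starts at height `h`, where a north step climbs `m` and an
east step descends `1`; it is `none` if the path goes below height `0`. The height of a point
`(x, y)` is `m * y - x`, so ballot paths are the paths from height `0` to height `0`. -/
def finalHeight (m : ℕ) : ℕ → List Step → Option ℕ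
  | h, [] => some h
  | h, Step.N :: w => finalHeight m (h + m) w
  | 0, Step.E :: _ => none
  | h + 1, Step.E :: w => finalHeight m h w

attribute [simp] finalHeight

variable {m k h h' : ℕ} {u v w Q : List Step}

theorem finalHeight_append (m h : ℕ) (u v : List Step) :
    finalHeight m h (u ++ v) = (finalHeight m h u).bind fun h' ↦ finalHeight m h' v := by
  induction u generalizing h with
  | nil => rfl
  | cons s u ih => cases s <;> cases h <;> simp [ih]

theorem finalHeight_append_of_eq_some (hu : finalHeight m h u = some h') :
    finalHeight m h (u ++ v) = finalHeight m h' v := by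
  simp [finalHeight_append, hu]

theorem finalHeight_append_eq_some :
    finalHeight m h (u ++ v) = some h' ↔
      ∃ g, finalHeight m h u = some g ∧ finalHeight m g v = some h' := by
  rw [finalHeight_append, Option.bind_eq_some_iff]

theorem finalHeight_add (c : ℕ) (hu : finalHeight m h u = some h') :
    finalHeight m (h + c) u = some (h' + c) := by
  induction u generalizing h with
  | nil => simpa using hu
  | cons s u ih =>
    cases s with
    | N => simpa [add_right_comm] using ih hu
    | E => cases h with
      | zero => simp at hu
      | succ h => simpa [add_right_comm] using ih hu

theorem finalHeight_of_zero (c : ℕ) (hu : finalHeight m 0 u = some 0) :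
    finalHeight m c u = some c := by
  simpa using finalHeight_add c hu

theorem finalHeight_append_east (hu : finalHeight m k u = some 0) :
    finalHeight m (k + 1) (u ++ Step.E :: v) = finalHeight m 0 v := by
  rw [finalHeight_append_of_eq_some (finalHeight_add 1 hu), finalHeight]

@[simp] theorem northCount_nil : northCount [] = 0 := rfl

@[simp] theorem eastCount_nil : eastCount [] = 0 := rfl

@[simp] theorem northCount_cons_north : northCount (Step.N :: w) = northCount w + 1 := by
  simp [northCount]

@[simp] theorem northCount_cons_east : northCount (Step.E :: w) = northCount w := by
  simp [northCount]

@[simp] theorem eastCount_cons_north : eastCount (Step.N :: w) = eastCount w := by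
  simp [eastCount]

@[simp] theorem eastCount_cons_east : eastCount (Step.E :: w) = eastCount w + 1 := by
  simp [eastCount]

@[simp] theorem northCount_append : northCount (u ++ w) = northCount u + northCount w := by
  simp [northCount]

@[simp] theorem eastCount_append : eastCount (u ++ w) = eastCount u + eastCount w := by
  simp [eastCount]

theorem length_eq_northCount_add_eastCount (w : List Step) :
    w.length = northCount w + eastCount w := by
  induction w with
  | nil => rfl
  | cons s w ih => cases s <;> simp [ih] <;> omega

theorem add_mul_northCount_eq (hu : finalHeight m h u = some h') :
    h + m * northCount u = h' + eastCount u := by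
  induction u generalizing h with
  | nil => simpa using hu
  | cons s u ih =>
    cases s with
    | N =>
      have := ih hu
      simp only [northCount_cons_north, eastCount_cons_north, mul_add]
      omega
    | E => cases h with
      | zero => simp at hu
      | succ h =>
        have := ih hu
        simp only [northCount_cons_east, eastCount_cons_east]
        omega

theorem isSome_finalHeight_iff (m h : ℕ) (u : List Step) :
    (finalHeight m h u).isSome ↔
      ∀ k, eastCount (u.take k) ≤ h + m * northCount (u.take k) := by
  induction u generalizing h with
  | nil => simp
  | cons s u ih =>
    rw [← Nat.and_forall_add_one]
    cases s with
    | N =>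
      simp only [finalHeight, ih, List.take_zero, eastCount_nil, northCount_nil, zero_le, true_and,
        List.take_succ_cons, eastCount_cons_north, northCount_cons_north, mul_add, mul_one]
      exact forall_congr' fun k ↦ by omega
    | E => cases h with
      | zero => simpa using ⟨0, by simp⟩
      | succ h =>
        simp only [finalHeight, ih, List.take_zero, eastCount_nil, northCount_nil, zero_le,
          true_and, List.take_succ_cons, eastCount_cons_east, northCount_cons_east]
        exact forall_congr' fun k ↦ by omega

theorem isBallot_iff_finalHeight : IsBallot m w ↔ finalHeight m 0 w = some 0 := by
  have hw := isSome_finalHeight_iff m 0 w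
  simp only [zero_add] at hw
  rw [IsBallot, ← hw, Option.isSome_iff_exists]
  constructor
  · rintro ⟨⟨h, hh⟩, hcount⟩
    have := add_mul_northCount_eq hh
    rw [hh, show h = 0 by omega]
  · intro hh
    have := add_mul_northCount_eq hh
    exact ⟨⟨0, hh⟩, by omega⟩

theorem exists_eq_append_east (hQ : finalHeight m (k + 1) Q = some 0) :
    ∃ u v, Q = u ++ Step.E :: v ∧ finalHeight m k u = some 0 ∧ finalHeight m 0 v = some 0 := by
  induction Q generalizing k with
  | nil => simp at hQ
  | cons s Q ih =>
    cases s with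
    | N =>
      rw [finalHeight, add_right_comm] at hQ
      obtain ⟨u, v, rfl, hu, hv⟩ := ih hQ
      exact ⟨Step.N :: u, v, rfl, hu, hv⟩
    | E => cases k with
      | zero => exact ⟨[], Q, rfl, rfl, hQ⟩
      | succ k =>
        obtain ⟨u, v, rfl, hu, hv⟩ := ih hQ
        exact ⟨Step.E :: u, v, rfl, hu, hv⟩

theorem eq_and_eq_of_append_east_eq {u' v' : List Step} (hu : finalHeight m k u = some 0)
    (hu' : finalHeight m k u' = some 0) (h : u ++ Step.E :: v = u' ++ Step.E :: v') :
    u = u' ∧ v = v' := by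
  have not_extend {p q r r' : List Step} (hp : finalHeight m k p = some 0)
      (hpq : finalHeight m k (p ++ q) = some 0) (hr : Step.E :: r = q ++ Step.E :: r') :
      q = [] := by
    cases q with
    | nil => rfl
    | cons s q =>
      obtain rfl : Step.E = s := (List.cons.inj hr).1
      simp [finalHeight_append_of_eq_some hp] at hpq
  rcases List.append_eq_append_iff.1 h with ⟨q, rfl, hq⟩ | ⟨q, rfl, hq⟩
  · obtain rfl := not_extend hu hu' hq
    simpa using hq
  · obtain rfl := not_extend hu' hu hq
    simpa [eq_comm] using hq

end Paths

section TamariOrder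

variable {m k : ℕ} {u v w C D S P Q R : List Step}

theorem TamariCovers.context (h : TamariCovers m P Q) (a b : List Step) :
    TamariCovers m (a ++ P ++ b) (a ++ Q ++ b) := by
  obtain ⟨w₁, S, w₂, hne, hhead, hS, hprime, rfl, rfl⟩ := h
  exact ⟨a ++ w₁, S, w₂ ++ b, hne, hhead, hS, hprime, by simp, by simp⟩

theorem TamariLE.context (h : TamariLE m P Q) (a b : List Step) :
    TamariLE m (a ++ P ++ b) (a ++ Q ++ b) :=
  h.lift (fun P ↦ a ++ P ++ b) fun _ _ hc ↦ hc.context a b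

theorem TamariLE.trans (h : TamariLE m P Q) (h' : TamariLE m Q R) : TamariLE m P R :=
  Relation.ReflTransGen.trans h h'

theorem TamariCovers.tamariLE (h : TamariCovers m P Q) : TamariLE m P Q :=
  Relation.ReflTransGen.single h

theorem TamariLE.append {P' Q' : List Step} (h : TamariLE m P Q) (h' : TamariLE m P' Q') :
    TamariLE m (P ++ P') (Q ++ Q') := by
  have hP : TamariLE m (P ++ P') (Q ++ P') := h.context [] P'
  exact hP.trans (by simpa using h'.context Q [])

theorem TamariCovers.finalHeight_eq (h : TamariCovers m P Q) (k : ℕ) :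
    finalHeight m k P = finalHeight m k Q := by
  obtain ⟨w₁, S, w₂, -, -, hS, -, rfl, rfl⟩ := h
  rw [isBallot_iff_finalHeight] at hS
  rw [List.append_assoc, finalHeight_append, finalHeight_append]
  congr 1
  funext g
  rw [finalHeight_append_of_eq_some (finalHeight_of_zero g hS)]
  cases g with
  | zero => simp
  | succ g =>
    rw [finalHeight, finalHeight_append_of_eq_some (finalHeight_of_zero g hS), finalHeight]

theorem TamariLE.finalHeight_eq (h : TamariLE m P Q) (k : ℕ) :
    finalHeight m k P = finalHeight m k Q := by
  induction h with
  | refl => rfl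
  | tail _ hc ih => rw [ih, hc.finalHeight_eq]

theorem TamariCovers.perm (h : TamariCovers m P Q) : P.Perm Q := by
  obtain ⟨w₁, S, w₂, -, -, -, -, rfl, rfl⟩ := h
  rw [List.append_assoc]
  exact List.perm_middle.symm.append_left w₁

theorem TamariLE.perm (h : TamariLE m P Q) : P.Perm Q := by
  induction h with
  | refl => rfl
  | tail _ hc ih => exact ih.trans hc.perm

theorem TamariLE.northCount_eq (h : TamariLE m P Q) : northCount P = northCount Q :=
  (h.perm.filter _).length_eq

theorem exists_prime_ballot_prefix (hw : finalHeight m 0 (Step.N :: w) = some 0) :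
    ∃ S v, Step.N :: w = S ++ v ∧ S ≠ [] ∧ S.head? = some Step.N ∧ IsBallot m S ∧
      (∀ k, 0 < k → k < S.length → ¬ IsBallot m (S.take k)) ∧ finalHeight m 0 v = some 0 := by
  classical
  have hex : ∃ k, IsBallot m ((Step.N :: w).take (k + 1)) :=
    ⟨w.length, by simpa [isBallot_iff_finalHeight] using hw⟩
  have hS := Nat.find_spec hex
  have hmin := fun k ↦ Nat.find_min hex (m := k)
  generalize Nat.find hex = l at hS hmin
  refine ⟨_, _, (List.take_append_drop (l + 1) _).symm, by simp, by simp, hS, ?_, ?_⟩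
  · rintro (_ | k) hk hkl hb
    · exact hk.false
    · have hkl' : k < l := by rw [List.length_take] at hkl; omega
      rw [List.take_take, min_eq_left (by omega)] at hb
      exact hmin k hkl' hb
  · rw [isBallot_iff_finalHeight] at hS
    rwa [← finalHeight_append_of_eq_some hS, List.take_append_drop]

theorem tamariLE_east_cons_append_east (w : List Step) (hw : finalHeight m 0 w = some 0) :
    TamariLE m (Step.E :: w) (w ++ [Step.E]) := by
  match w, hw with
  | [], _ => exact Relation.ReflTransGen.refl
  | Step.N :: w, hw =>
    obtain ⟨S, v, hSv, hne, hhead, hS, hprime, hv⟩ := exists_prime_ballot_prefix hw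
    have : v.length < w.length + 1 := by
      rw [← List.length_cons, hSv, List.length_append]
      exact Nat.lt_add_of_pos_left (List.length_pos_iff.2 hne)
    have hswap : TamariCovers m (Step.E :: (S ++ v)) (S ++ Step.E :: v) :=
      ⟨[], S, v, hne, hhead, hS, hprime, rfl, rfl⟩
    rw [hSv]
    refine hswap.tamariLE.trans ?_
    simpa using (tamariLE_east_cons_append_east v hv).context S []
termination_by w.length

theorem split_swapped_factor {w₁ w₂ : List Step} (hC : finalHeight m k C = some 0)
    (hD : finalHeight m 0 D = some 0) (hS : finalHeight m 0 S = some 0)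
    (h : C ++ D = w₁ ++ S ++ Step.E :: w₂) :
    (∃ w', C = w₁ ++ S ++ Step.E :: w' ∧ w₂ = w' ++ D) ∨
      ∃ w', D = w' ++ S ++ Step.E :: w₂ ∧ w₁ = C ++ w' := by
  rcases List.append_eq_append_iff.1 h with ⟨a, hwS, rfl⟩ | ⟨_ | ⟨s, a⟩, rfl, ha⟩
  · rcases List.append_eq_append_iff.1 hwS with ⟨b, rfl, rfl⟩ | ⟨b, rfl, rfl⟩
    · -- `C` ends inside `S`, at height `0`, so the east step after `S` would go below `0`.
      obtain ⟨g, -, hg⟩ := finalHeight_append_eq_some.1 hC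
      obtain ⟨g', hb, ha⟩ := finalHeight_append_eq_some.1 hS
      have hb' := finalHeight_add g hb
      rw [zero_add, hg, Option.some_inj] at hb'
      obtain rfl : g' = 0 := by omega
      simp [finalHeight_append_of_eq_some ha] at hD
    · exact .inr ⟨b, rfl, rfl⟩
  · obtain rfl : Step.E :: w₂ = D := ha
    simp at hD
  · obtain ⟨rfl, rfl⟩ := List.cons.inj ha
    exact .inl ⟨a, rfl, rfl⟩

theorem TamariCovers.exists_of_append (h : TamariCovers m P (C ++ D))
    (hC : finalHeight m k C = some 0) (hD : finalHeight m 0 D = some 0) :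
    (∃ C', TamariCovers m C' C ∧ P = C' ++ D) ∨ ∃ D', TamariCovers m D' D ∧ P = C ++ D' := by
  obtain ⟨w₁, S, w₂, hne, hhead, hS, hprime, rfl, hCD⟩ := h
  rcases split_swapped_factor hC hD (isBallot_iff_finalHeight.1 hS) hCD with
    ⟨w', rfl, rfl⟩ | ⟨w', rfl, rfl⟩
  · exact .inl ⟨_, ⟨w₁, S, w', hne, hhead, hS, hprime, rfl, rfl⟩, by simp⟩
  · exact .inr ⟨_, ⟨w', S, w₂, hne, hhead, hS, hprime, rfl, rfl⟩, by simp⟩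

theorem TamariLE.exists_of_append (h : TamariLE m P (C ++ D))
    (hC : finalHeight m k C = some 0) (hD : finalHeight m 0 D = some 0) :
    ∃ C' D', P = C' ++ D' ∧ TamariLE m C' C ∧ TamariLE m D' D := by
  unfold TamariLE at h
  induction h using Relation.ReflTransGen.head_induction_on with
  | refl => exact ⟨C, D, rfl, .refl, .refl⟩
  | head hc _ ih =>
    obtain ⟨C', D', rfl, hCC', hDD'⟩ := ih
    rcases hc.exists_of_append (hCC'.finalHeight_eq k ▸ hC) (hDD'.finalHeight_eq 0 ▸ hD) with
      ⟨C'', hC'', rfl⟩ | ⟨D'', hD'', rfl⟩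
    · exact ⟨C'', D', rfl, .head hC'' hCC', hDD'⟩
    · exact ⟨C', D'', rfl, hCC', .head hD'' hDD'⟩

theorem TamariCovers.exists_of_append_east (h : TamariCovers m P (Q ++ [Step.E])) :
    (∃ Q', TamariCovers m Q' Q ∧ P = Q' ++ [Step.E]) ∨
      ∃ w S, IsBallot m S ∧ Q = w ++ S ∧ P = w ++ Step.E :: S := by
  obtain ⟨w₁, S, w₂, hne, hhead, hS, hprime, rfl, hQ⟩ := h
  rcases List.eq_nil_or_concat w₂ with rfl | ⟨w', s, rfl⟩
  · exact .inr ⟨w₁, S, hS, (List.append_inj' hQ rfl).1, by simp⟩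
  · have hQ' : Q ++ [Step.E] = (w₁ ++ S ++ Step.E :: w') ++ [s] := by simpa using hQ
    obtain ⟨rfl, hs⟩ := List.append_inj' hQ' rfl
    obtain rfl : Step.E = s := by simpa using hs
    exact .inl ⟨_, ⟨w₁, S, w', hne, hhead, hS, hprime, rfl, rfl⟩, by simp⟩

theorem TamariLE.exists_of_append_east (h : TamariLE m P (Q ++ [Step.E]))
    (hQ : finalHeight m k Q = some 0) :
    ∃ p q, P = p ++ Step.E :: q ∧ finalHeight m k p = some 0 ∧ finalHeight m 0 q = some 0 ∧
      TamariLE m (p ++ q) Q := by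
  unfold TamariLE at h
  induction h using Relation.ReflTransGen.head_induction_on with
  | refl => exact ⟨Q, [], rfl, hQ, rfl, by simpa using .refl⟩
  | @head P R hc _ ih =>
    obtain ⟨p, q, rfl, hp, hq, hpq⟩ := ih
    have hpE : finalHeight m (k + 1) (p ++ [Step.E]) = some 0 := finalHeight_append_east hp
    rw [List.append_cons] at hc
    rcases hc.exists_of_append hpE hq with ⟨p', hp', rfl⟩ | ⟨q', hq', rfl⟩
    · rcases hp'.exists_of_append_east with ⟨p'', hp'', rfl⟩ | ⟨w, S, hS, rfl, rfl⟩
      · exact ⟨p'', q, by simp, by rwa [hp''.finalHeight_eq], hq,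
          .head (by simpa using hp''.context [] q) hpq⟩
      · rw [isBallot_iff_finalHeight] at hS
        obtain ⟨g, hw, hg⟩ := finalHeight_append_eq_some.1 hp
        obtain rfl : g = 0 := by simpa [finalHeight_of_zero g hS] using hg
        exact ⟨w, S ++ q, by simp, hw, by rwa [finalHeight_append_of_eq_some hS],
          by simpa using hpq⟩
    · exact ⟨p, q', by simp, hp, by rwa [hq'.finalHeight_eq],
        .head (by simpa using hq'.context p []) hpq⟩

theorem TamariLE.exists_of_append_east_append (h : TamariLE m P (u ++ Step.E :: v))
    (hu : finalHeight m k u = some 0) (hv : finalHeight m 0 v = some 0) :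
    ∃ p q r, P = p ++ Step.E :: (q ++ r) ∧ finalHeight m k p = some 0 ∧
      finalHeight m 0 q = some 0 ∧ TamariLE m (p ++ q) u ∧ TamariLE m r v := by
  rw [List.append_cons] at h
  obtain ⟨p', r, rfl, hp', hr⟩ := h.exists_of_append (finalHeight_append_east hu) hv
  obtain ⟨p, q, rfl, hp, hq, hpq⟩ := hp'.exists_of_append_east hu
  exact ⟨p, q, r, by simp, hp, hq, hpq, hr⟩

theorem TamariLE.append_east_append {p q r : List Step} (hq : finalHeight m 0 q = some 0)
    (hu : TamariLE m (p ++ q) u) (hv : TamariLE m r v) :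
    TamariLE m (p ++ Step.E :: (q ++ r)) (u ++ Step.E :: v) := by
  have hmove : TamariLE m (p ++ Step.E :: (q ++ r)) ((p ++ q) ++ Step.E :: r) := by
    simpa using (tamariLE_east_cons_append_east q hq).context p r
  exact hmove.trans (hu.append (by simpa using hv.context [Step.E] []))

theorem tamariLE_north_cons_iff (hQ : finalHeight m 0 (Step.N :: Q) = some 0) :
    TamariLE m P (Step.N :: Q) ↔ ∃ P', P = Step.N :: P' ∧ TamariLE m P' Q := by
  refine ⟨fun h ↦ ?_, fun ⟨P', hP, h⟩ ↦ by simpa [hP] using h.context [Step.N] []⟩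
  unfold TamariLE at h
  induction h using Relation.ReflTransGen.head_induction_on with
  | refl => exact ⟨Q, rfl, .refl⟩
  | head hc hle ih =>
    have hP := TamariLE.finalHeight_eq (.head hc hle) 0
    obtain ⟨R, rfl, hR⟩ := ih
    obtain ⟨_ | ⟨s, w₁⟩, S, w₂, hne, hhead, hS, hprime, rfl, hR'⟩ := hc
    · rw [hQ] at hP
      simp at hP
    · obtain ⟨rfl, rfl⟩ := List.cons.inj hR'
      exact ⟨_, rfl, .head ⟨w₁, S, w₂, hne, hhead, hS, hprime, rfl, rfl⟩ hR⟩

end TamariOrder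

section Intervals

variable {m k n : ℕ} {u v w P Q : List Step}

/-- The number of points at height `0` visited by a path that starts at height `k`. -/
def contacts (m : ℕ) : ℕ → List Step → ℕ
  | k, [] => if k = 0 then 1 else 0
  | k, Step.N :: w => (if k = 0 then 1 else 0) + contacts m (k + m) w
  | 0, Step.E :: _ => 0
  | k + 1, Step.E :: w => contacts m k w

attribute [simp] contacts

theorem contacts_pos (hw : finalHeight m k w = some 0) : 0 < contacts m k w := by
  induction w generalizing k with
  | nil => simp_all
  | cons s w ih =>
    cases s with
    | N => exact Nat.add_pos_right _ (ih hw)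
    | E => cases k with
      | zero => simp at hw
      | succ k => exact ih hw

theorem contacts_append_east (hu : finalHeight m k u = some 0) :
    contacts m (k + 1) (u ++ Step.E :: v) = contacts m 0 v := by
  induction u generalizing k with
  | nil => simp_all
  | cons s u ih =>
    cases s with
    | N => simpa [add_right_comm] using ih hu
    | E => cases k with
      | zero => simp at hu
      | succ k => exact ih hu

/-- The concatenation point of `u` and `v` is counted on both sides of the sum. -/
theorem contacts_append_add_one (hu : finalHeight m k u = some 0) :
    contacts m k (u ++ v) + 1 = contacts m k u + contacts m 0 v := by
  induction u generalizing k with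
  | nil => simp_all [add_comm]
  | cons s u ih =>
    cases s with
    | N => simp [add_assoc, ih hu]
    | E => cases k with
      | zero => simp at hu
      | succ k => exact ih hu

/-- The indices, along a path that starts at height `k`, of its points at height `0`. -/
def contactPositions (m k : ℕ) (w : List Step) : Finset ℕ :=
  (Finset.range (w.length + 1)).filter fun i ↦ finalHeight m k (w.take i) = some 0

theorem mem_contactPositions {i : ℕ} :
    i ∈ contactPositions m k w ↔ i ≤ w.length ∧ finalHeight m k (w.take i) = some 0 := by
  simp [contactPositions]

theorem sum_contactPositions_north {M : Type*} [AddCommMonoid M] (f : ℕ → M) (m k : ℕ)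
    (w : List Step) :
    ∑ i ∈ contactPositions m k (Step.N :: w), f i =
      ∑ i ∈ contactPositions m (k + m) w, f (i + 1) + if k = 0 then f 0 else 0 := by
  simp [contactPositions, Finset.sum_filter, Finset.sum_range_succ' _ (w.length + 1)]

theorem sum_contactPositions_east {M : Type*} [AddCommMonoid M] (f : ℕ → M) (m k : ℕ)
    (w : List Step) :
    ∑ i ∈ contactPositions m (k + 1) (Step.E :: w), f i =
      ∑ i ∈ contactPositions m k w, f (i + 1) := by
  simp [contactPositions, Finset.sum_filter, Finset.sum_range_succ' _ (w.length + 1)]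

theorem sum_contactPositions {M : Type*} [AddCommMonoid M] (f : ℕ → M)
    (hw : finalHeight m k w = some 0) :
    ∑ i ∈ contactPositions m k w, f (contacts m 0 (w.drop i)) =
      ∑ c ∈ Finset.range (contacts m k w), f (c + 1) := by
  induction w generalizing k with
  | nil => simp_all [contactPositions]
  | cons s w ih =>
    cases s with
    | N =>
      rw [sum_contactPositions_north]
      simp only [List.drop_succ_cons, List.drop_zero, ih hw]
      rcases eq_or_ne k 0 with rfl | hk
      · simp [add_comm 1, Finset.sum_range_succ]
      · simp [hk]
    | E => cases k with
      | zero => simp at hw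
      | succ k =>
        rw [sum_contactPositions_east]
        simpa using ih hw

/-- The length of the initial ascent of a path. -/
def initialAscent : List Step → ℕ
  | Step.N :: w => initialAscent w + 1
  | _ => 0

/-- The product of `1 / a!` over the lengths `a` of all ascents of a path but the initial one. -/
def tailWeight : List Step → ℚ
  | [] => 1
  | Step.N :: w => tailWeight w
  | Step.E :: w => tailWeight w / (initialAscent w).factorial

attribute [simp] initialAscent tailWeight

/-- The product of `1 / a!` over the lengths `a` of all ascents of a path. -/
def ascentWeight (w : List Step) : ℚ :=
  tailWeight w / (initialAscent w).factorial

theorem initialAscent_append_east :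
    initialAscent (u ++ Step.E :: v) = initialAscent u := by
  induction u with
  | nil => simp
  | cons s u ih => cases s <;> simp [ih]

theorem tailWeight_append_east :
    tailWeight (u ++ Step.E :: v) = tailWeight u * ascentWeight v := by
  induction u with
  | nil => simp [ascentWeight]
  | cons s u ih => cases s <;> simp [ih, initialAscent_append_east, div_mul_eq_mul_div]

theorem initialAscent_le_northCount (w : List Step) : initialAscent w ≤ northCount w := by
  induction w with
  | nil => simp
  | cons s w ih => cases s <;> simp [ih]

instance : Finite Step :=
  Finite.of_injective (fun s : Step ↦ decide (s = Step.N)) fun s t ↦ by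
    cases s <;> cases t <;> simp

theorem finite_intervals (m k n : ℕ) :
    {x : List Step × List Step | finalHeight m k x.2 = some 0 ∧ northCount x.2 = n ∧
      TamariLE m x.1 x.2}.Finite := by
  have hfin := List.finite_length_eq Step (k + m * n + n)
  refine (hfin.prod hfin).subset ?_
  rintro ⟨P, Q⟩ ⟨hQ, rfl, hPQ⟩
  have hlen : Q.length = k + m * northCount Q + northCount Q := by
    have := add_mul_northCount_eq hQ
    have := length_eq_northCount_add_eastCount Q
    dsimp only at *
    omega
  exact ⟨hPQ.perm.length_eq.trans hlen, hlen⟩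

/-- The pairs `P ≤ Q` of paths with `n` north steps from height `k` to height `0`, in the order
generated by the covering relation of the `m`-Tamari lattice. -/
noncomputable def intervals (m k n : ℕ) : Finset (List Step × List Step) :=
  (finite_intervals m k n).toFinset

/-- The intervals `P ≤ Q` in which the initial ascent of `Q` has length `j`. -/
noncomputable def ascentIntervals (m k j n : ℕ) : Finset (List Step × List Step) :=
  (intervals m k n).filter fun x ↦ initialAscent x.2 = j

variable {j a b i : ℕ} {x y x' y' : List Step × List Step}

theorem mem_intervals :
    x ∈ intervals m k n ↔
      finalHeight m k x.2 = some 0 ∧ northCount x.2 = n ∧ TamariLE m x.1 x.2 := by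
  simp [intervals]

theorem mem_ascentIntervals :
    x ∈ ascentIntervals m k j n ↔ x ∈ intervals m k n ∧ initialAscent x.2 = j :=
  Finset.mem_filter

theorem finalHeight_fst_of_mem_intervals (hx : x ∈ intervals m k n) :
    finalHeight m k x.1 = some 0 := by
  obtain ⟨hQ, -, hle⟩ := mem_intervals.1 hx
  rw [hle.finalHeight_eq, hQ]

theorem finalHeight_drop_of_mem_contactPositions (hw : finalHeight m k w = some 0)
    (hi : i ∈ contactPositions m k w) : finalHeight m 0 (w.drop i) = some 0 := by
  rw [← finalHeight_append_of_eq_some (mem_contactPositions.1 hi).2, List.take_append_drop, hw]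

theorem ascentIntervals_eq_empty_of_lt (h : n < j) : ascentIntervals m k j n = ∅ := by
  refine Finset.filter_false_of_mem fun x hx ↦ ?_
  have := initialAscent_le_northCount x.2
  have := (mem_intervals.1 hx).2.1
  omega

/-- The interval between `P₁ E P₂ P'` and `Q E Q'`, where `P = P₁ P₂` is cut after `i` steps. All
intervals that start at a positive height arise in this way, by cutting at the first contact of the
upper path. -/
def glue (x : List Step × List Step) (i : ℕ) (y : List Step × List Step) :
    List Step × List Step :=
  (x.1.take i ++ Step.E :: (x.1.drop i ++ y.1), x.2 ++ Step.E :: y.2)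

theorem glue_mem_ascentIntervals (hx : x ∈ ascentIntervals m k j a)
    (hi : i ∈ contactPositions m k x.1) (hy : y ∈ intervals m 0 b) :
    glue x i y ∈ ascentIntervals m (k + 1) j (a + b) := by
  obtain ⟨hx, hj⟩ := mem_ascentIntervals.1 hx
  have hdrop := finalHeight_drop_of_mem_contactPositions (finalHeight_fst_of_mem_intervals hx) hi
  obtain ⟨hQ, rfl, hle⟩ := mem_intervals.1 hx
  obtain ⟨hQ', rfl, hle'⟩ := mem_intervals.1 hy
  refine mem_ascentIntervals.2 ⟨mem_intervals.2 ⟨?_, by simp [glue], ?_⟩,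
    initialAscent_append_east.trans hj⟩
  · rw [glue, finalHeight_append_east hQ, hQ']
  · exact TamariLE.append_east_append hdrop (by rwa [List.take_append_drop]) hle'

theorem glue_injective {i' n' : ℕ} (hx : x ∈ intervals m k a) (hx' : x' ∈ intervals m k n)
    (hi : i ∈ contactPositions m k x.1) (hi' : i' ∈ contactPositions m k x'.1)
    (hy : y ∈ intervals m 0 b) (hy' : y' ∈ intervals m 0 n') (h : glue x i y = glue x' i' y') :
    x = x' ∧ i = i' ∧ y = y' := by
  obtain ⟨⟨P, Q⟩, ⟨P₁, Q₁⟩⟩ := x, y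
  obtain ⟨⟨P', Q'⟩, ⟨P₁', Q₁'⟩⟩ := x', y'
  obtain ⟨hlower, hupper⟩ := Prod.mk.inj h
  obtain ⟨hQ, -, -⟩ := mem_intervals.1 hx
  obtain ⟨hQ', -, -⟩ := mem_intervals.1 hx'
  obtain ⟨-, -, hle⟩ := mem_intervals.1 hy
  obtain ⟨-, -, hle'⟩ := mem_intervals.1 hy'
  obtain ⟨hil, hi⟩ := mem_contactPositions.1 hi
  obtain ⟨hil', hi'⟩ := mem_contactPositions.1 hi'
  dsimp only at *
  obtain ⟨rfl, rfl⟩ := eq_and_eq_of_append_east_eq hQ hQ' hupper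
  obtain ⟨htake, htail⟩ := eq_and_eq_of_append_east_eq hi hi' hlower
  obtain ⟨hdrop, rfl⟩ :=
    List.append_inj' htail (hle.perm.length_eq.trans hle'.perm.length_eq.symm)
  obtain rfl : P = P' := by
    rw [← List.take_append_drop i P, ← List.take_append_drop i' P', htake, hdrop]
  have hlen := congrArg List.length htake
  rw [List.length_take_of_le hil, List.length_take_of_le hil'] at hlen
  exact ⟨rfl, hlen, rfl⟩

theorem exists_glue_eq (hx : x ∈ ascentIntervals m (k + 1) j n) :
    ∃ a b, a + b = n ∧ ∃ y ∈ ascentIntervals m k j a, ∃ i ∈ contactPositions m k y.1,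
      ∃ z ∈ intervals m 0 b, glue y i z = x := by
  obtain ⟨P, Q⟩ := x
  obtain ⟨hx, hj⟩ := mem_ascentIntervals.1 hx
  obtain ⟨hQ, hn, hle⟩ := mem_intervals.1 hx
  dsimp only at *
  obtain ⟨u, v, rfl, hu, hv⟩ := exists_eq_append_east hQ
  obtain ⟨p, q, r, rfl, hp, hq, hpq, hr⟩ := hle.exists_of_append_east_append hu hv
  rw [initialAscent_append_east] at hj
  refine ⟨northCount u, northCount v, by simpa using hn, (p ++ q, u),
    mem_ascentIntervals.2 ⟨mem_intervals.2 ⟨hu, rfl, hpq⟩, hj⟩, p.length,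
    mem_contactPositions.2 ⟨by simp, by simpa using hp⟩, (r, v), mem_intervals.2 ⟨hv, rfl, hr⟩, ?_⟩
  simp [glue]

theorem sum_ascentIntervals_succ {M : Type*} [AddCommMonoid M] (m k j n : ℕ)
    (f : List Step × List Step → M) :
    ∑ x ∈ ascentIntervals m (k + 1) j n, f x =
      ∑ ab ∈ Finset.HasAntidiagonal.antidiagonal n, ∑ x ∈ ascentIntervals m k j ab.1,
        ∑ i ∈ contactPositions m k x.1, ∑ y ∈ intervals m 0 ab.2, f (glue x i y) := by
  simp only [Finset.sum_sigma']
  symm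
  refine Finset.sum_bij (fun z _ ↦ glue z.2.1 z.2.2.1 z.2.2.2) ?_ ?_ ?_ fun _ _ ↦ rfl
  · rintro ⟨⟨a, b⟩, x, i, y⟩ h
    simp only [Finset.mem_sigma, Finset.HasAntidiagonal.mem_antidiagonal] at h
    obtain ⟨rfl, hx, hi, hy⟩ := h
    exact glue_mem_ascentIntervals hx hi hy
  · rintro ⟨⟨a, b⟩, x, i, y⟩ h ⟨⟨a', b'⟩, x', i', y'⟩ h' heq
    simp only [Finset.mem_sigma] at h h'
    have hx := (mem_ascentIntervals.1 h.2.1).1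
    have hx' := (mem_ascentIntervals.1 h'.2.1).1
    obtain ⟨rfl, rfl, rfl⟩ := glue_injective hx hx' h.2.2.1 h'.2.2.1 h.2.2.2 h'.2.2.2 heq
    obtain rfl : a = a' := (mem_intervals.1 hx).2.1.symm.trans (mem_intervals.1 hx').2.1
    obtain rfl : b = b' :=
      (mem_intervals.1 h.2.2.2).2.1.symm.trans (mem_intervals.1 h'.2.2.2).2.1
    rfl
  · intro x hx
    obtain ⟨a, b, hab, y, hy, i, hi, z, hz, rfl⟩ := exists_glue_eq hx
    exact ⟨⟨(a, b), y, i, z⟩, by simp [hab, hy, hi, hz], rfl⟩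

theorem ascentIntervals_zero_zero_zero : ascentIntervals m 0 0 0 = {([], [])} := by
  ext ⟨P, Q⟩
  simp only [mem_ascentIntervals, mem_intervals, Finset.mem_singleton, Prod.mk.injEq]
  constructor
  · rintro ⟨⟨hQ, hn, hle⟩, -⟩
    have hcount := add_mul_northCount_eq hQ
    have hlen := length_eq_northCount_add_eastCount Q
    obtain rfl : Q = [] := List.length_eq_zero_iff.1 (by simp_all)
    exact ⟨hle.perm.eq_nil, rfl⟩
  · rintro ⟨rfl, rfl⟩
    exact ⟨⟨rfl, rfl, .refl⟩, rfl⟩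

theorem ascentIntervals_zero_zero_succ : ascentIntervals m 0 0 (n + 1) = ∅ := by
  refine Finset.filter_false_of_mem ?_
  rintro ⟨P, _ | ⟨_ | _, Q⟩⟩ hx <;> simp [mem_intervals] at hx ⊢

theorem sum_ascentIntervals_zero_succ {M : Type*} [AddCommMonoid M] (m j n : ℕ)
    (f : List Step × List Step → M) :
    ∑ x ∈ ascentIntervals m 0 (j + 1) (n + 1), f x =
      ∑ x ∈ ascentIntervals m m j n, f (Step.N :: x.1, Step.N :: x.2) := by
  symm
  refine Finset.sum_bij (fun x _ ↦ (Step.N :: x.1, Step.N :: x.2)) ?_ ?_ ?_ fun _ _ ↦ rfl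
  · rintro ⟨P, Q⟩ h
    simp only [mem_ascentIntervals, mem_intervals] at h ⊢
    obtain ⟨⟨hQ, rfl, hle⟩, rfl⟩ := h
    have hNQ : finalHeight m 0 (Step.N :: Q) = some 0 := by simpa using hQ
    exact ⟨⟨hNQ, by simp, (tamariLE_north_cons_iff hNQ).2 ⟨P, rfl, hle⟩⟩, by simp⟩
  · rintro ⟨P, Q⟩ - ⟨P', Q'⟩ - h
    simpa using h
  · rintro ⟨P, _ | ⟨_ | _, Q⟩⟩ h <;> simp only [mem_ascentIntervals, mem_intervals] at h
    · simp at h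
    · obtain ⟨⟨hNQ, hn, hle⟩, hj⟩ := h
      obtain ⟨P', rfl, hle'⟩ := (tamariLE_north_cons_iff hNQ).1 hle
      exact ⟨(P', Q), by simp_all [mem_ascentIntervals, mem_intervals], rfl⟩
    · simp at h

end Intervals

section GeneratingSeries

open Polynomial

/-- The generating series, in the number `n` of north steps, of the intervals of paths from height
`k` to height `0` whose upper path has initial ascent `j`. The variable of the coefficients counts
the contacts of the lower path, and the non-initial ascents of the upper path contribute their
inverse factorials. -/
noncomputable def ascentSeries (m k j : ℕ) : PowerSeries ℚ[X] :=
  PowerSeries.mk fun n ↦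
    ∑ x ∈ ascentIntervals m k j n, C (tailWeight x.2) * X ^ contacts m k x.1

/-- The generating series of the `m`-Tamari intervals, with the variable of the coefficients
counting the contacts of the lower path, and every ascent of the upper path contributing its inverse
factorial. -/
noncomputable def intervalSeries (m : ℕ) : PowerSeries ℚ[X] :=
  PowerSeries.mk fun n ↦ ∑ x ∈ intervals m 0 n, C (ascentWeight x.2) * X ^ contacts m 0 x.1

theorem ascentSeries_zero_zero (m : ℕ) : ascentSeries m 0 0 = PowerSeries.C X := by
  ext1 (_ | n)
  · simp [ascentSeries, ascentIntervals_zero_zero_zero]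
  · simp [ascentSeries, ascentIntervals_zero_zero_succ, PowerSeries.coeff_succ_C]

theorem ascentSeries_zero_succ (m j : ℕ) :
    ascentSeries m 0 (j + 1) = PowerSeries.C X * (PowerSeries.X * ascentSeries m m j) := by
  ext1 (_ | n)
  · simp [ascentSeries, ascentIntervals_eq_empty_of_lt]
  · rw [PowerSeries.coeff_C_mul, PowerSeries.coeff_succ_X_mul, ascentSeries, ascentSeries,
      PowerSeries.coeff_mk, PowerSeries.coeff_mk, sum_ascentIntervals_zero_succ, Finset.mul_sum]
    refine Finset.sum_congr rfl fun x _ ↦ ?_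
    simp [pow_add, mul_left_comm]

/-- Cutting a lower path at each of its contacts replaces `x ^ c` by
`1 + x + ⋯ + x ^ (c - 1) = (x ^ c - 1) / (x - 1)`. -/
theorem X_sub_one_mul_sum_glue {m k j a b : ℕ} {x : List Step × List Step}
    (hx : x ∈ ascentIntervals m k j a) :
    (X - 1) * ∑ i ∈ contactPositions m k x.1, ∑ y ∈ intervals m 0 b,
        (C (tailWeight (glue x i y).2) * X ^ contacts m (k + 1) (glue x i y).1 : ℚ[X]) =
      C (tailWeight x.2) * (X ^ contacts m k x.1 - 1) *
        ∑ y ∈ intervals m 0 b, C (ascentWeight y.2) * X ^ contacts m 0 y.1 := by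
  have hP := finalHeight_fst_of_mem_intervals (mem_ascentIntervals.1 hx).1
  have hterm : ∀ i ∈ contactPositions m k x.1, ∀ y : List Step × List Step,
      (C (tailWeight (glue x i y).2) * X ^ contacts m (k + 1) (glue x i y).1 : ℚ[X]) =
        C (tailWeight x.2) * X ^ (contacts m 0 (x.1.drop i) - 1) *
          (C (ascentWeight y.2) * X ^ contacts m 0 y.1) := by
    intro i hi y
    have hdrop := finalHeight_drop_of_mem_contactPositions hP hi
    have hcontacts : contacts m 0 (x.1.drop i ++ y.1) =
        (contacts m 0 (x.1.drop i) - 1) + contacts m 0 y.1 := by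
      have := contacts_append_add_one (v := y.1) hdrop
      have := contacts_pos hdrop
      omega
    rw [glue, contacts_append_east (mem_contactPositions.1 hi).2, tailWeight_append_east,
      hcontacts, C_mul, pow_add]
    ring
  rw [Finset.sum_congr rfl fun i hi ↦ Finset.sum_congr rfl fun y _ ↦ hterm i hi y]
  simp only [← Finset.mul_sum, ← Finset.sum_mul]
  rw [sum_contactPositions (fun c ↦ (X : ℚ[X]) ^ (c - 1)) hP]
  simp only [Nat.add_sub_cancel, ← mul_geom_sum (X : ℚ[X]) (contacts m k x.1)]
  ring

theorem sub_one_mul_ascentSeries_succ (m k j : ℕ) :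
    (PowerSeries.C X - 1) * ascentSeries m (k + 1) j =
      (ascentSeries m k j - PowerSeries.map (C.comp (evalRingHom 1)) (ascentSeries m k j)) *
        intervalSeries m := by
  ext1 n
  rw [← map_one PowerSeries.C, ← map_sub, PowerSeries.coeff_C_mul, PowerSeries.coeff_mul,
    ascentSeries, PowerSeries.coeff_mk, sum_ascentIntervals_succ, Finset.mul_sum]
  refine Finset.sum_congr rfl fun ab _ ↦ ?_
  simp only [ascentSeries, intervalSeries, map_sub, PowerSeries.coeff_map, PowerSeries.coeff_mk,
    RingHom.comp_apply, map_sum, map_mul, map_pow, coe_evalRingHom, eval_C, eval_X, one_pow,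
    map_one, mul_one, ← Finset.sum_sub_distrib]
  rw [Finset.sum_mul, Finset.mul_sum]
  refine Finset.sum_congr rfl fun x hx ↦ ?_
  rw [X_sub_one_mul_sum_glue hx]
  ring

theorem X_pow_dvd_intervalSeries_sub_sum (m M : ℕ) :
    PowerSeries.X ^ M ∣ intervalSeries m -
      ∑ j ∈ Finset.range M, PowerSeries.C (C (1 / (j.factorial : ℚ))) * ascentSeries m 0 j := by
  rw [PowerSeries.X_pow_dvd_iff]
  intro n hn
  have hmaps : ∀ x ∈ intervals m 0 n, initialAscent x.2 ∈ Finset.range M := fun x hx ↦ by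
    have := initialAscent_le_northCount x.2
    have := (mem_intervals.1 hx).2.1
    exact Finset.mem_range.2 (by omega)
  simp only [map_sub, map_sum, PowerSeries.coeff_C_mul, intervalSeries, ascentSeries,
    PowerSeries.coeff_mk, ascentIntervals]
  rw [← Finset.sum_fiberwise_of_maps_to hmaps, sub_eq_zero]
  refine Finset.sum_congr rfl fun j _ ↦ ?_
  rw [Finset.mul_sum]
  refine Finset.sum_congr rfl fun x hx ↦ ?_
  rw [ascentWeight, (Finset.mem_filter.1 hx).2, ← mul_assoc, ← C_mul, one_div_mul_eq_div]

theorem coeff_coeff_zero_intervalSeries (m n : ℕ) :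
    (PowerSeries.coeff n (intervalSeries m)).coeff 0 = 0 := by
  rw [coeff_zero_eq_eval_zero, intervalSeries, PowerSeries.coeff_mk, eval_finsetSum]
  refine Finset.sum_eq_zero fun x hx ↦ ?_
  simp [(contacts_pos (finalHeight_fst_of_mem_intervals hx)).ne']

end GeneratingSeries

section PermutationCounting

open Equiv

/-- Orbit–stabilizer for permutations acting on words by rearrangement. -/
theorem card_range_comp_perm_mul_prod_factorial {α β : Type*} [Fintype α] [DecidableEq β]
    (f : α → β) :
    Nat.card (Set.range fun σ : Perm α ↦ f ∘ σ) *
        ∏ b ∈ Finset.univ.image f, (Fintype.card {a // f a = b}).factorial =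
      (Fintype.card α).factorial := by
  classical
  have horbit : MulAction.orbit (Perm α)ᵈᵐᵃ f = Set.range fun σ : Perm α ↦ f ∘ σ :=
    (DomMulAct.mk (M := Perm α)).symm.surjective.range_comp fun σ : Perm α ↦ f ∘ σ
  have hstab : Nat.card (MulAction.stabilizer (Perm α)ᵈᵐᵃ f) =
      ∏ b ∈ Finset.univ.image f, (Fintype.card {a // f a = b}).factorial := by
    rw [← DomMulAct.stabilizer_card', Fintype.card_eq_nat_card]
    exact Nat.card_congr (DomMulAct.mk.symm.subtypeEquiv fun σ ↦ DomMulAct.mem_stabilizer_iff)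
  rw [← horbit, ← hstab, Nat.card_congr (MulAction.orbitEquivQuotientStabilizer (Perm α)ᵈᵐᵃ f),
    ← Subgroup.card_eq_card_quotient_mul_card_subgroup, ← Fintype.card_perm,
    Fintype.card_eq_nat_card]
  exact Nat.card_congr DomMulAct.mk.symm

theorem card_perm_inv_eq_sort {n : ℕ} {α : Type*} [LinearOrder α] {h : Fin n → α}
    (hmono : Monotone h) :
    Nat.card {σ : Perm (Fin n) // σ⁻¹ = Tuple.sort (h ∘ σ)} =
      Nat.card (Set.range fun σ : Perm (Fin n) ↦ h ∘ σ) := by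
  refine Nat.card_eq_of_bijective (fun σ ↦ ⟨h ∘ σ.1, σ.1, rfl⟩) ⟨?_, ?_⟩
  · rintro ⟨σ, hσ⟩ ⟨τ, hτ⟩ hστ
    have hcomp : h ∘ σ = h ∘ τ := congrArg Subtype.val hστ
    exact Subtype.ext (inv_injective (by rw [hσ, hτ, hcomp]))
  · rintro ⟨_, σ, rfl⟩
    have hcancel : (h ∘ σ) ∘ σ.symm = h := by simp [Function.comp_assoc]
    have hsorted : (h ∘ σ) ∘ Tuple.sort (h ∘ σ) = h :=
      (Tuple.unique_monotone (Tuple.monotone_sort _) (hcancel.symm ▸ hmono)).trans hcancel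
    have hcomp : h ∘ ⇑(Tuple.sort (h ∘ σ))⁻¹ = h ∘ σ := by
      ext i
      simpa using (congrFun hsorted ((Tuple.sort (h ∘ σ)).symm i)).symm
    exact ⟨⟨(Tuple.sort (h ∘ σ))⁻¹, by rw [inv_inv, hcomp]⟩, Subtype.ext hcomp⟩

end PermutationCounting

section Labellings

variable {n p q r c : ℕ} {w Q : List Step} {lab : Fin n → ℕ}

/-- The abscissa of the point of `w` reached after `p` steps: two north steps belong to the same
ascent exactly when they lie in the same column. -/
def column (w : List Step) (p : ℕ) : ℕ :=
  eastCount (w.take p)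

/-- The number of north steps of a path in the column of abscissa `c`. -/
def columnHeight : List Step → ℕ → ℕ
  | [], _ => 0
  | Step.N :: w, c => columnHeight w c + if c = 0 then 1 else 0
  | Step.E :: _, 0 => 0
  | Step.E :: w, c + 1 => columnHeight w c

attribute [simp] columnHeight

theorem columnHeight_zero (w : List Step) : columnHeight w 0 = initialAscent w := by
  induction w with
  | nil => rfl
  | cons s w ih => cases s <;> simp [ih]

theorem prod_factorial_columnHeight_mul_tailWeight {K : ℕ} (hK : eastCount w < K) :
    (∏ c ∈ Finset.range K, ((columnHeight w c).factorial : ℚ)) * tailWeight w =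
      (initialAscent w).factorial := by
  induction w generalizing K with
  | nil => simp
  | cons s w ih =>
    obtain ⟨K, rfl⟩ := Nat.exists_eq_add_one_of_ne_zero hK.ne_bot
    cases s with
    | N =>
      have ih' := ih (K := K + 1) (by simpa using hK)
      rw [Finset.prod_range_succ'] at ih' ⊢
      simp only [columnHeight, tailWeight, initialAscent, columnHeight_zero, Nat.succ_ne_zero,
        if_false, if_true, add_zero, Nat.factorial_succ] at ih' ⊢
      push_cast
      linear_combination ((initialAscent w : ℚ) + 1) * ih'
    | E =>
      rw [Finset.prod_range_succ', tailWeight]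
      simp only [columnHeight, Nat.factorial_zero, Nat.cast_one, mul_one, initialAscent]
      rw [← mul_div_assoc, ih (by simpa using hK), div_self (by positivity)]

theorem monotone_column (w : List Step) : Monotone (column w) := fun _ _ hpq ↦
  ((List.take_sublist_take_left hpq).filter _).length_le

theorem column_le_eastCount (w : List Step) (p : ℕ) : column w p ≤ eastCount w :=
  ((List.take_sublist p w).filter _).length_le

theorem column_add_one_of_east (hp : w[p]? = some Step.E) : column w (p + 1) = column w p + 1 := by
  simp [column, List.take_add_one, hp]

theorem column_add_one_of_north (hp : w[p]? = some Step.N) : column w (p + 1) = column w p := by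
  simp [column, List.take_add_one, hp]

theorem getElem?_eq_north_of_column_eq (hpr : p ≤ r) (hrq : r < q) (hcol : column w p = column w q)
    (hq : w[q]? = some Step.N) : w[r]? = some Step.N := by
  obtain ⟨hqlen, -⟩ := List.getElem?_eq_some_iff.1 hq
  have hr : w[r]? = some w[r] := List.getElem?_eq_getElem (hrq.trans hqlen)
  cases hs : w[r] with
  | N => rw [hr, hs]
  | E =>
    have := column_add_one_of_east (hr.trans (congrArg some hs))
    have := monotone_column w hpr
    have := monotone_column w (show r + 1 ≤ q from hrq)
    omega

/-- The indices of the north steps of a path. -/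
def northPositions (w : List Step) : Finset ℕ :=
  (Finset.range w.length).filter fun p ↦ w[p]? = some Step.N

theorem mem_northPositions : p ∈ northPositions w ↔ w[p]? = some Step.N := by
  simp only [northPositions, Finset.mem_filter, Finset.mem_range, and_iff_right_iff_imp]
  exact fun h ↦ (List.getElem?_eq_some_iff.1 h).1

theorem sum_northPositions_cons (f : ℕ → ℕ) (s : Step) (w : List Step) :
    ∑ p ∈ northPositions (s :: w), f p =
      ∑ p ∈ northPositions w, f (p + 1) + if s = Step.N then f 0 else 0 := by
  simp [northPositions, Finset.sum_filter, Finset.sum_range_succ' _ w.length]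

theorem card_northPositions (w : List Step) : (northPositions w).card = northCount w := by
  rw [Finset.card_eq_sum_ones]
  induction w with
  | nil => simp [northPositions]
  | cons s w ih => cases s <;> rw [sum_northPositions_cons, ih] <;> simp

theorem card_filter_column_eq (w : List Step) (c : ℕ) :
    ((northPositions w).filter fun p ↦ column w p = c).card = columnHeight w c := by
  rw [Finset.card_filter]
  induction w generalizing c with
  | nil => simp [northPositions]
  | cons s w ih =>
    rw [sum_northPositions_cons]
    cases s with
    | N => simp [← ih, column, eq_comm]
    | E =>
      have hcol (p : ℕ) : column (Step.E :: w) (p + 1) = column w p + 1 := by simp [column]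
      cases c with
      | zero => simp [hcol]
      | succ c => simpa [hcol] using ih c

theorem IsLabelling.exists_eq (hlab : IsLabelling n Q lab) (hQ : northCount Q = n)
    (hp : Q[p]? = some Step.N) : ∃ i, lab i = p := by
  have himage : Finset.univ.image lab = northPositions Q := by
    refine Finset.eq_of_subset_of_card_le ?_ ?_
    · simp [Finset.subset_iff, mem_northPositions, hlab.2.1]
    · rw [card_northPositions, Finset.card_image_of_injective _ hlab.1, hQ, Finset.card_fin]
  simpa [← himage] using mem_northPositions.2 hp

theorem IsLabelling.lt_of_column_eq (hlab : IsLabelling n Q lab) (hQ : northCount Q = n)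
    {i j : Fin n} (hlt : lab i < lab j) (hcol : column Q (lab i) = column Q (lab j)) : i < j := by
  obtain ⟨d, hd⟩ := Nat.exists_eq_add_of_lt hlt
  induction d generalizing i with
  | zero => exact hlab.2.2 i j hd
  | succ d ih =>
    obtain ⟨l, hl⟩ := hlab.exists_eq hQ
      (getElem?_eq_north_of_column_eq (Nat.le_succ _) (by omega) hcol (hlab.2.1 j))
    have hcol' := column_add_one_of_north (hlab.2.1 i)
    exact (hlab.2.2 i l hl).trans
      (ih (by omega) (by rw [hl, hcol', hcol]) (by omega))

theorem isLabelling_iff (hQ : northCount Q = n) :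
    IsLabelling n Q lab ↔ Function.Injective lab ∧ (∀ i, Q[lab i]? = some Step.N) ∧
      ∀ i j, lab i < lab j → column Q (lab i) = column Q (lab j) → i < j := by
  refine ⟨fun h ↦ ⟨h.1, h.2.1, fun i j ↦ h.lt_of_column_eq hQ⟩, fun ⟨hinj, hN, h⟩ ↦
    ⟨hinj, hN, fun i j hij ↦ h i j (by omega) ?_⟩⟩
  rw [hij, column_add_one_of_north (hN i)]

/-- The index of the `i`-th north step of `Q`. -/
noncomputable def northPosition (hQ : northCount Q = n) : Fin n ↪o ℕ :=
  (northPositions Q).orderEmbOfFin ((card_northPositions Q).trans hQ)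

theorem range_northPosition (hQ : northCount Q = n) :
    Set.range (northPosition hQ) = northPositions Q :=
  Finset.range_orderEmbOfFin _ _

theorem getElem?_northPosition (hQ : northCount Q = n) (i : Fin n) :
    Q[northPosition hQ i]? = some Step.N :=
  mem_northPositions.1 (Finset.orderEmbOfFin_mem _ _ i)

theorem isLabelling_northPosition_comp_iff (hQ : northCount Q = n) (σ : Equiv.Perm (Fin n)) :
    IsLabelling n Q (northPosition hQ ∘ σ) ↔
      σ⁻¹ = Tuple.sort ((column Q ∘ northPosition hQ) ∘ σ) := by
  have hmono : Monotone (column Q ∘ northPosition hQ) :=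
    (monotone_column Q).comp (northPosition hQ).monotone
  rw [isLabelling_iff hQ, Tuple.eq_sort_iff]
  simp only [(northPosition hQ).injective.comp σ.injective, Function.comp_apply,
    getElem?_northPosition, implies_true, true_and, OrderEmbedding.lt_iff_lt]
  constructor
  · exact fun h ↦ ⟨by simpa [Function.comp_def] using hmono, fun i j hij hcol ↦
      h _ _ (by simpa using hij) hcol⟩
  · exact fun h i j hij hcol ↦ by simpa using h.2 _ _ hij (by simpa using hcol)

theorem IsLabelling.exists_perm (hlab : IsLabelling n Q lab) (hQ : northCount Q = n) :
    ∃ σ : Equiv.Perm (Fin n), northPosition hQ ∘ σ = lab := by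
  have hmem (i : Fin n) : lab i ∈ Set.range (northPosition hQ) := by
    rw [range_northPosition]
    exact mem_northPositions.2 (hlab.2.1 i)
  choose s hs using hmem
  have hs_inj : Function.Injective s := fun i j hij ↦ hlab.1 (by rw [← hs i, ← hs j, hij])
  exact ⟨Equiv.ofBijective s (Finite.injective_iff_bijective.1 hs_inj), funext hs⟩

theorem card_isLabelling_eq_card_range (hQ : northCount Q = n) :
    Nat.card {lab // IsLabelling n Q lab} =
      Nat.card (Set.range fun σ : Equiv.Perm (Fin n) ↦ (column Q ∘ northPosition hQ) ∘ σ) := by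
  rw [← card_perm_inv_eq_sort ((monotone_column Q).comp (northPosition hQ).monotone)]
  symm
  refine Nat.card_eq_of_bijective (fun σ ↦ ⟨northPosition hQ ∘ σ.1,
    (isLabelling_northPosition_comp_iff hQ σ.1).2 σ.2⟩) ⟨?_, ?_⟩
  · rintro ⟨σ, hσ⟩ ⟨τ, hτ⟩ hστ
    exact Subtype.ext (Equiv.ext fun i ↦
      (northPosition hQ).injective (congrFun (congrArg Subtype.val hστ) i))
  · rintro ⟨lab, hlab⟩
    obtain ⟨σ, rfl⟩ := hlab.exists_perm hQ
    exact ⟨⟨σ, (isLabelling_northPosition_comp_iff hQ σ).1 hlab⟩, rfl⟩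

theorem card_column_northPosition_eq (hQ : northCount Q = n) (c : ℕ) :
    Fintype.card {i // (column Q ∘ northPosition hQ) i = c} = columnHeight Q c := by
  rw [← card_filter_column_eq, Fintype.card_subtype]
  refine Finset.card_bij (fun i _ ↦ northPosition hQ i) ?_ ?_ ?_
  · intro i hi
    simpa [mem_northPositions, getElem?_northPosition] using hi
  · exact fun i _ j _ hij ↦ (northPosition hQ).injective hij
  · intro p hp
    obtain ⟨hpN, hpc⟩ := Finset.mem_filter.1 hp
    rw [← Finset.mem_coe, ← range_northPosition hQ] at hpN
    obtain ⟨i, rfl⟩ := hpN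
    exact ⟨i, by simpa using hpc, rfl⟩

theorem card_isLabelling (hQ : northCount Q = n) :
    (Nat.card {lab // IsLabelling n Q lab} : ℚ) = n.factorial * ascentWeight Q := by
  have horbit := card_range_comp_perm_mul_prod_factorial (column Q ∘ northPosition hQ)
  simp only [card_column_northPosition_eq, Fintype.card_fin] at horbit
  have hprod : ∏ c ∈ Finset.univ.image (column Q ∘ northPosition hQ), (columnHeight Q c).factorial =
      ∏ c ∈ Finset.range (eastCount Q + 1), (columnHeight Q c).factorial := by
    refine Finset.prod_subset ?_ fun c _ hc ↦ ?_
    · intro c hc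
      obtain ⟨i, -, rfl⟩ := Finset.mem_image.1 hc
      exact Finset.mem_range.2 (Nat.lt_succ_of_le (column_le_eastCount Q _))
    · have : IsEmpty {i // (column Q ∘ northPosition hQ) i = c} :=
        ⟨fun i ↦ hc (Finset.mem_image.2 ⟨i.1, Finset.mem_univ _, i.2⟩)⟩
      rw [← card_column_northPosition_eq hQ, Fintype.card_eq_zero, Nat.factorial_zero]
  have hweight := prod_factorial_columnHeight_mul_tailWeight (Nat.lt_succ_self (eastCount Q))
  rw [card_isLabelling_eq_card_range hQ, ← horbit, hprod, ascentWeight]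
  push_cast
  rw [mul_assoc, ← mul_div_assoc, hweight, div_self (by positivity), mul_one]

theorem card_labelledTamariInterval (m n : ℕ) :
    (Nat.card {x : (List Step × List Step) × (Fin n → ℕ) // IsLabelledTamariInterval m n x} : ℚ) =
      n.factorial * (PowerSeries.coeff n (intervalSeries m)).eval 1 := by
  have hiff (x : (List Step × List Step) × (Fin n → ℕ)) :
      IsLabelledTamariInterval m n x ↔ x.1 ∈ intervals m 0 n ∧ IsLabelling n x.1.2 x.2 := by
    rw [mem_intervals, IsLabelledTamariInterval, isBallot_iff_finalHeight, isBallot_iff_finalHeight]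
    constructor
    · rintro ⟨-, -, hQ, hn, hle, hlab⟩
      exact ⟨⟨hQ, hn, hle⟩, hlab⟩
    · rintro ⟨⟨hQ, hn, hle⟩, hlab⟩
      exact ⟨(hle.finalHeight_eq 0).trans hQ, hle.northCount_eq.trans hn, hQ, hn, hle, hlab⟩
  let e : {x : (List Step × List Step) × (Fin n → ℕ) // IsLabelledTamariInterval m n x} ≃
      Σ x : intervals m 0 n, {lab // IsLabelling n x.1.2 lab} :=
    { toFun x := ⟨⟨x.1.1, ((hiff x.1).1 x.2).1⟩, ⟨x.1.2, ((hiff x.1).1 x.2).2⟩⟩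
      invFun y := ⟨(y.1.1, y.2.1), (hiff _).2 ⟨y.1.2, y.2.2⟩⟩
      left_inv _ := rfl
      right_inv _ := rfl }
  have hfinite (x : intervals m 0 n) : Finite {lab // IsLabelling n x.1.2 lab} := by
    obtain ⟨-, hn, -⟩ := mem_intervals.1 x.2
    refine Set.Finite.subset (Set.finite_range fun σ : Equiv.Perm (Fin n) ↦
      northPosition hn ∘ σ) fun lab hlab ↦ IsLabelling.exists_perm hlab hn
  rw [Nat.card_congr e, Nat.card_sigma, Nat.cast_sum, intervalSeries, PowerSeries.coeff_mk,
    Polynomial.eval_finsetSum, Finset.mul_sum, ← Finset.sum_coe_sort (intervals m 0 n)]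
  refine Finset.sum_congr rfl fun x _ ↦ ?_
  rw [card_isLabelling (mem_intervals.1 x.2).2.1]
  simp

end Labellings

section DividedDifference

open Polynomial

variable {ι R S : Type*} [DecidableEq ι] [CommRing R] [CommRing S]

/-- The divided difference of `f` at the nodes `v i`, `i ∈ s`, where `f i` is the value at the
node `v i`. The differences of the nodes are inverted by `Ring.inverse`, so the value is
meaningful only when they are units. -/
noncomputable def dividedDifference (s : Finset ι) (v : ι → R) : (ι → R) →ₗ[R] R :=
  ∑ i ∈ s, Ring.inverse (∏ j ∈ s.erase i, (v i - v j)) • LinearMap.proj i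

theorem dividedDifference_apply (s : Finset ι) (v f : ι → R) :
    dividedDifference s v f =
      ∑ i ∈ s, Ring.inverse (∏ j ∈ s.erase i, (v i - v j)) * f i := by
  simp [dividedDifference]

/-- The nodes `v i`, `i ∈ s`, differ by units. -/
def UnitDifferences (s : Finset ι) (v : ι → R) : Prop :=
  ∀ i ∈ s, ∀ j ∈ s, i ≠ j → IsUnit (v i - v j)

theorem unitDifferences_id {K : Type*} [Field K] (s : Finset K) : UnitDifferences s id :=
  fun _ _ _ _ hne ↦ (sub_ne_zero.2 hne).isUnit

variable {s : Finset ι} {v f g a : ι → R}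

theorem dividedDifference_congr (h : ∀ i ∈ s, f i = g i) :
    dividedDifference s v f = dividedDifference s v g := by
  rw [dividedDifference_apply, dividedDifference_apply]
  exact Finset.sum_congr rfl fun i hi ↦ by rw [h i hi]

theorem dvd_dividedDifference {d : R} (h : ∀ i ∈ s, d ∣ f i) : d ∣ dividedDifference s v f := by
  rw [dividedDifference_apply]
  exact Finset.dvd_sum fun i hi ↦ (h i hi).mul_left _

theorem UnitDifferences.isUnit_prod (hv : UnitDifferences s v) {i : ι} (hi : i ∈ s) :
    IsUnit (∏ j ∈ s.erase i, (v i - v j)) :=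
  IsUnit.prod_iff.2 fun j hj ↦
    hv i hi j (Finset.mem_of_mem_erase hj) (Finset.ne_of_mem_erase hj).symm

theorem map_dividedDifference (hv : UnitDifferences s v) (φ : R →+* S) :
    φ (dividedDifference s v f) =
      dividedDifference s (fun i ↦ φ (v i)) (fun i ↦ φ (f i)) := by
  simp only [dividedDifference_apply, map_sum, map_mul]
  refine Finset.sum_congr rfl fun i hi ↦ congrArg (· * φ (f i)) ?_
  have hunit := hv.isUnit_prod hi
  have hinv := congrArg φ (Ring.mul_inverse_cancel _ hunit)
  simp only [map_mul, map_prod, map_sub, map_one] at hinv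
  have hφ := hunit.map φ
  simp only [map_prod, map_sub] at hφ
  exact hφ.mul_left_cancel (hinv.trans (Ring.mul_inverse_cancel _ hφ).symm)

theorem dividedDifference_eval [IsDomain R] (hv : UnitDifferences s v) {P : R[X]}
    (hP : P.degree < s.card) :
    dividedDifference s v (fun i ↦ P.eval (v i)) = P.coeff (s.card - 1) := by
  let φ := algebraMap R (FractionRing R)
  have hφ : Function.Injective φ := FaithfulSMul.algebraMap_injective R (FractionRing R)
  have hinj : Set.InjOn (fun i ↦ φ (v i)) s := fun i hi j hj hij ↦ by
    by_contra hne
    exact (hv i hi j hj hne).ne_zero (sub_eq_zero.2 (hφ hij))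
  apply hφ
  rw [map_dividedDifference hv, ← coeff_map,
    Lagrange.coeff_eq_sum hinj ((degree_map_eq_of_injective hφ P).trans_lt hP),
    dividedDifference_apply]
  refine Finset.sum_congr rfl fun i _ ↦ ?_
  rw [Ring.inverse_eq_inv, eval_map_apply, div_eq_inv_mul]

theorem dividedDifference_pow_of_add_one_lt [IsDomain R] (hv : UnitDifferences s v) {k : ℕ}
    (hk : k + 1 < s.card) : dividedDifference s v (fun i ↦ v i ^ k) = 0 := by
  have h := dividedDifference_eval hv (P := X ^ k)
    ((degree_X_pow_le k).trans_lt (by exact_mod_cast k.lt_succ_self.trans hk))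
  simpa [coeff_X_pow, (Nat.lt_sub_of_add_lt hk).ne'] using h

theorem dividedDifference_pow_of_add_one_eq [IsDomain R] (hv : UnitDifferences s v) {k : ℕ}
    (hk : k + 1 = s.card) : dividedDifference s v (fun i ↦ v i ^ k) = 1 := by
  have h := dividedDifference_eval hv (P := X ^ k)
    ((degree_X_pow_le k).trans_lt (by exact_mod_cast Nat.lt_of_succ_le hk.le))
  simpa [← hk] using h

theorem dividedDifference_inverse [IsDomain R] (hv : UnitDifferences s v) (hs : s.Nonempty)
    (ha : ∀ i ∈ s, a i * v i = 1) :
    dividedDifference s v a = (-1) ^ (s.card - 1) * ∏ i ∈ s, a i := by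
  -- The polynomial `(1 - ∏ (1 - a i * X)) / X` takes the value `(v i)⁻¹` at `v i`.
  let E : R[X] := ∏ i ∈ s, (1 - C (a i) * X)
  have hE : E.coeff 0 = 1 := by simp [E, coeff_zero_eq_eval_zero, eval_prod]
  have hlin (i : ι) : (1 - C (a i) * X).natDegree ≤ 1 := by compute_degree
  have hdeg : E.natDegree ≤ s.card := by
    refine (natDegree_prod_le _ _).trans ((Finset.sum_le_sum fun i _ ↦ hlin i).trans ?_)
    simp
  have htop : E.coeff s.card = (-1) ^ s.card * ∏ i ∈ s, a i := by
    have h := coeff_prod_of_natDegree_le (s := s) (fun i ↦ 1 - C (a i) * X) 1 fun i _ ↦ hlin i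
    rw [mul_one] at h
    rw [h, ← Finset.prod_const, ← Finset.prod_mul_distrib]
    simp [coeff_one]
  have heval (i : ι) (hi : i ∈ s) : (divX (1 - E)).eval (v i) = a i := by
    have hroot : E.eval (v i) = 0 := by
      rw [eval_prod]
      exact Finset.prod_eq_zero hi (by simp [ha i hi])
    have h := congrArg (eval (v i)) (divX_mul_X_add (1 - E))
    simp only [eval_add, eval_mul, eval_X, eval_C, eval_sub, eval_one, coeff_sub, coeff_one_zero,
      hE, hroot, sub_self, add_zero, sub_zero] at h
    have ha' := ha i hi
    linear_combination a i * h - (divX (1 - E)).eval (v i) * ha'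
  have hcard := hs.card_pos
  have hlt : (divX (1 - E)).degree < s.card := by
    refine (degree_le_natDegree).trans_lt ?_
    have : (1 - E).natDegree ≤ s.card := (natDegree_sub_le _ _).trans (by simpa using hdeg)
    rw [natDegree_divX_eq_natDegree_tsub_one]
    exact_mod_cast (by omega : (1 - E).natDegree - 1 < s.card)
  rw [← dividedDifference_congr heval, dividedDifference_eval hv hlt, coeff_divX, coeff_sub,
    Nat.sub_add_cancel hcard, htop, coeff_one, if_neg hcard.ne']
  obtain ⟨k, hk⟩ := Nat.exists_eq_add_of_lt hcard
  rw [hk]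
  simp [pow_succ]

end DividedDifference

section KernelRoots

open Polynomial

/-- `s` is the set of roots, all simple, of the trinomial `Y ^ (m + 1) - Y ^ m + u` with `u ≠ 0`.
These `y` are the nodes of the kernel method: up to an exponential factor the quantities
`y ^ m / u` and `1 / (1 - y)`, which coincide, are the catalytic variable. -/
structure IsKernelRoots {K : Type*} [Field K] (m : ℕ) (u : K) (s : Finset K) : Prop where
  ne_zero : u ≠ 0
  prod_eq : ∏ y ∈ s, (X - C y) = X ^ (m + 1) - X ^ m + C u

namespace IsKernelRoots

variable {K : Type*} [Field K] {m : ℕ} {u : K} {s : Finset K} {y : K}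

theorem card_eq (h : IsKernelRoots m u s) : s.card = m + 1 := by
  have hdeg := congrArg natDegree h.prod_eq
  rw [natDegree_prod_of_monic _ _ fun y _ ↦ monic_X_sub_C y] at hdeg
  simp only [natDegree_X_sub_C, Finset.sum_const, smul_eq_mul, mul_one] at hdeg
  rw [hdeg]
  compute_degree!

theorem prod_sub (h : IsKernelRoots m u s) (x : K) :
    ∏ y ∈ s, (x - y) = x ^ (m + 1) - x ^ m + u := by
  simpa [eval_prod] using congrArg (eval x) h.prod_eq

theorem pow_mul_one_sub (h : IsKernelRoots m u s) (hy : y ∈ s) : y ^ m * (1 - y) = u := by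
  have hroot := h.prod_sub y
  rw [Finset.prod_eq_zero hy (sub_self y)] at hroot
  linear_combination hroot

theorem one_sub_ne_zero (h : IsKernelRoots m u s) (hy : y ∈ s) : 1 - y ≠ 0 :=
  right_ne_zero_of_mul ((h.pow_mul_one_sub hy).trans_ne h.ne_zero)

theorem inv_one_sub (h : IsKernelRoots m u s) (hy : y ∈ s) : (1 - y)⁻¹ = u⁻¹ * y ^ m := by
  have hu := h.ne_zero
  have hy' := h.one_sub_ne_zero hy
  field_simp
  linear_combination -h.pow_mul_one_sub hy

theorem inv_one_sub_sub_one (h : IsKernelRoots m u s) (hy : y ∈ s) :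
    (1 - y)⁻¹ - 1 = y * (1 - y)⁻¹ := by
  have := h.one_sub_ne_zero hy
  field_simp
  ring

theorem prod_eq_pow_mul (h : IsKernelRoots m u s) (hm : m ≠ 0) :
    ∏ y ∈ s, y = (-1) ^ (m + 1) * u := by
  have hzero : ∏ y ∈ s, -y = u := by simpa [hm] using h.prod_sub 0
  rw [Finset.prod_neg, h.card_eq] at hzero
  have hsign : ((-1 : K) ^ (m + 1)) * (-1) ^ (m + 1) = 1 := by
    rw [← mul_pow, neg_one_mul, neg_neg, one_pow]
  linear_combination (-1) ^ (m + 1) * hzero - (∏ y ∈ s, y) * hsign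

theorem node_ne_zero (h : IsKernelRoots m u s) (hm : m ≠ 0) (hy : y ∈ s) : y ≠ 0 := by
  rintro rfl
  exact h.ne_zero (by simpa [hm] using (h.pow_mul_one_sub hy).symm)

theorem sum_inv_one_sub (h : IsKernelRoots m u s) : ∑ y ∈ s, (1 - y)⁻¹ = u⁻¹ := by
  -- logarithmic derivative of the trinomial at `1`
  have hsplits : (∏ y ∈ s, (X - C y)).Splits := Splits.prod fun y _ ↦ Splits.X_sub_C y
  have hone : (∏ y ∈ s, (X - C y)).eval 1 = u := by simp [h.prod_eq]
  have hlog := hsplits.eval_derivative_div_eval_of_ne_zero (hone.trans_ne h.ne_zero)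
  have hderiv : (∏ y ∈ s, (X - C y)).derivative.eval 1 = 1 := by
    simp [h.prod_eq, derivative_X_pow]
  rw [hone, hderiv, roots_prod_X_sub_C] at hlog
  simpa using hlog.symm

end IsKernelRoots

theorem exists_isKernelRoots {K : Type*} [Field K] [CharZero K] [IsAlgClosed K] {m : ℕ}
    (hm : m ≠ 0) {u : K} (hu : u ≠ 0) (hdisc : (m + 1 : K) ^ (m + 1) * u ≠ m ^ m) :
    ∃ s, IsKernelRoots m u s := by
  classical
  set P : K[X] := X ^ (m + 1) - X ^ m + C u with hP
  have hmonic : P.Monic := by rw [hP]; monicity!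
  have hnodup : P.roots.Nodup := by
    refine Multiset.nodup_iff_count_le_one.2 fun y ↦ ?_
    rw [count_roots]
    by_contra! hmult
    obtain ⟨hroot, hderiv⟩ := (one_lt_rootMultiplicity_iff_isRoot hmonic.ne_zero).1 hmult
    simp only [hP, IsRoot.def, derivative_add, derivative_sub, derivative_X_pow, derivative_C,
      eval_add, eval_sub, eval_mul, eval_pow, eval_X, eval_C, eval_natCast,
      map_natCast, Nat.add_sub_cancel, add_zero, Nat.cast_add, Nat.cast_one] at hroot hderiv
    have hpow : (m + 1 : K) * y ^ (m + 1) = m * y ^ m := by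
      rw [← mul_pow_sub_one hm]
      linear_combination y * hderiv
    have hpow_m : y ^ m = (m + 1) * u := by linear_combination hpow - (m + 1 : K) * hroot
    have hnode : (m + 1) * y = m :=
      mul_right_cancel₀ hu (by linear_combination hroot + hpow_m - y * hpow_m)
    exact hdisc (by rw [pow_succ, mul_assoc, ← hpow_m, ← mul_pow, hnode])
  refine ⟨P.roots.toFinset, hu, ?_⟩
  rw [← hP, Finset.prod, Multiset.toFinset_val, Multiset.dedup_eq_self.2 hnodup]
  exact ((IsAlgClosed.splits P).eq_prod_roots_of_monic hmonic).symm

theorem infinite_setOf_exists_isKernelRoots {K : Type*} [Field K] [CharZero K] [IsAlgClosed K]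
    {m : ℕ} (hm : m ≠ 0) : {u : K | ∃ s, IsKernelRoots m u s}.Infinite := by
  have hfinite : ({0, (m : K) ^ m / (m + 1) ^ (m + 1)} : Set K).Finite := Set.toFinite _
  refine hfinite.infinite_compl.mono fun u hu ↦ ?_
  simp only [Set.mem_compl_iff, Set.mem_insert_iff, Set.mem_singleton_iff, not_or] at hu
  refine exists_isKernelRoots hm hu.1 fun hdisc ↦ hu.2 ?_
  rw [← hdisc, mul_div_cancel_left₀ _ (pow_ne_zero _ (Nat.cast_add_one_ne_zero m))]

/-- The polynomial `M` in `u` such that the divided difference of `y ^ k` at the roots `y` of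
`Y ^ (m + 1) - Y ^ m + u` is `M u`. -/
noncomputable def kernelMoment (K : Type*) [CommRing K] (m k : ℕ) : K[X] :=
  if h : m < k then kernelMoment K m (k - 1) - X * kernelMoment K m (k - 1 - m)
  else if k = m then 1 else 0
termination_by k

theorem IsKernelRoots.dividedDifference_pow {K : Type*} [Field K] [DecidableEq K] {m : ℕ} {u : K}
    {s : Finset K} (h : IsKernelRoots m u s) (k : ℕ) :
    dividedDifference s id (fun y ↦ y ^ k) = (kernelMoment K m k).eval u := by
  induction k using Nat.strong_induction_on with
  | _ k ih =>
    rw [kernelMoment]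
    split_ifs with hmk hk
    · have hrec : dividedDifference s id (fun y ↦ y ^ k) = dividedDifference s id
          ((fun y ↦ y ^ (k - 1)) - u • fun y ↦ y ^ (k - 1 - m)) :=
        dividedDifference_congr fun y hy ↦ by
          obtain ⟨e, rfl⟩ := Nat.exists_eq_add_of_lt hmk
          have hroot := h.pow_mul_one_sub hy
          simp only [Nat.add_sub_cancel, Nat.add_sub_cancel_left, Pi.sub_apply, Pi.smul_apply,
            smul_eq_mul]
          linear_combination -(y ^ e) * hroot
      rw [hrec, map_sub, map_smul, ih _ (by omega), ih _ (by omega)]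
      simp
    · simpa using dividedDifference_pow_of_add_one_eq (unitDifferences_id s)
        (hk ▸ h.card_eq.symm)
    · simpa using dividedDifference_pow_of_add_one_lt (unitDifferences_id s)
        (k := k) (by rw [h.card_eq]; omega)

theorem kernelMoment_eval_zero (K : Type*) [CommRing K] {m k : ℕ} (h : m ≤ k) :
    (kernelMoment K m k).eval 0 = 1 := by
  induction k, h using Nat.le_induction with
  | base => simp [kernelMoment]
  | succ k hk ih =>
    rw [kernelMoment]
    simp [Nat.lt_succ_of_le hk, ih]

theorem eq_zero_of_forall_dividedDifference_eq_zero {K : Type*} [Field K] [CharZero K]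
    [IsAlgClosed K] [DecidableEq K] {m : ℕ} (hm : m ≠ 0) {q : K[X]} (hq : q.coeff 0 = 0)
    (h : ∀ u s, IsKernelRoots m u s →
      dividedDifference s id (fun y ↦ q.eval (1 - y)⁻¹) = 0) : q = 0 := by
  set d := q.natDegree
  let R : K[X] := ∑ e ∈ Finset.range (d + 1), C (q.coeff e) * X ^ (d - e) * kernelMoment K m (m * e)
  have hroot (u : K) (s : Finset K) (hs : IsKernelRoots m u s) : R.eval u = 0 := by
    have hu := hs.ne_zero
    have hsum : dividedDifference s id (fun y ↦ q.eval (1 - y)⁻¹) = dividedDifference s id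
        (∑ e ∈ Finset.range (d + 1), (q.coeff e * u⁻¹ ^ e) • fun y ↦ y ^ (m * e)) :=
      dividedDifference_congr fun y hy ↦ by
        rw [hs.inv_one_sub hy, eval_eq_sum_range, Finset.sum_apply]
        exact Finset.sum_congr rfl fun e _ ↦ by
          rw [mul_pow, ← pow_mul, Pi.smul_apply, smul_eq_mul, mul_assoc]
    rw [h u s hs, map_sum] at hsum
    calc R.eval u = u ^ d * ∑ e ∈ Finset.range (d + 1), dividedDifference s id
          ((q.coeff e * u⁻¹ ^ e) • fun y ↦ y ^ (m * e)) := by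
          rw [eval_finsetSum, Finset.mul_sum]
          refine Finset.sum_congr rfl fun e he ↦ ?_
          rw [map_smul, hs.dividedDifference_pow, smul_eq_mul, eval_mul, eval_mul, eval_C, eval_pow,
            eval_X, pow_sub₀ u hu (Finset.mem_range_succ_iff.1 he), inv_pow]
          ring
      _ = 0 := by rw [← hsum, mul_zero]
  have hR : R = 0 := by
    refine eq_zero_of_infinite_isRoot R ((infinite_setOf_exists_isKernelRoots hm).mono ?_)
    rintro u ⟨s, hs⟩
    exact hroot u s hs
  by_contra hne
  have hd : d ≠ 0 := fun hd ↦ hne (by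
    rw [eq_C_of_natDegree_eq_zero hd, hq, C_0])
  have hlead : R.eval 0 = q.leadingCoeff := by
    rw [eval_finsetSum, Finset.sum_range_succ, Finset.sum_eq_zero fun e he ↦ ?_]
    · simp [kernelMoment_eval_zero K (Nat.le_mul_of_pos_right m (Nat.pos_of_ne_zero hd)), d]
    · simp [Nat.sub_ne_zero_of_lt (Finset.mem_range.1 he)]
  rw [hR, eval_zero] at hlead
  exact hne (leadingCoeff_eq_zero.1 hlead.symm)

end KernelRoots

section Substitution

open PowerSeries

variable {R A : Type*} [CommRing R] [CommRing A]

theorem powerSeries_ringHom_ext {f g : R⟦X⟧ →+* A⟦X⟧} (hX : X ∣ f X)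
    (hC : ∀ r, f (C r) = g (C r)) (hfg : f X = g X) : f = g := by
  have htrunc : f.comp Polynomial.coeToPowerSeries.ringHom =
      g.comp Polynomial.coeToPowerSeries.ringHom :=
    Polynomial.ringHom_ext (by simpa using hC) (by simpa using hfg)
  ext F n
  have hsplit := F.eq_shift_mul_X_pow_add_trunc (n + 1)
  have htail (e : R⟦X⟧ →+* A⟦X⟧) (he : X ∣ e X) (G : R⟦X⟧) :
      coeff n (e (G * X ^ (n + 1))) = 0 := by
    rw [map_mul, map_pow]
    exact X_pow_dvd_iff.1 ((pow_dvd_pow_of_dvd he _).mul_left _) n n.lt_succ_self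
  rw [hsplit, map_add, map_add, map_add, map_add, htail f hX, htail g (hfg ▸ hX)]
  exact congrArg (0 + coeff n ·) (RingHom.congr_fun htrunc (F.trunc (n + 1)))

open scoped PowerSeries.WithPiTopology in
theorem exists_powerSeries_ringHom (φ : R →+* A⟦X⟧) {τ : A⟦X⟧} (hτ : constantCoeff τ = 0) :
    ∃ f : R⟦X⟧ →+* A⟦X⟧, (∀ r, f (C r) = φ r) ∧ f X = τ := by
  let _ : UniformSpace R := ⊥
  let _ : UniformSpace A := ⊥
  have heval : HasEval τ :=
    WithPiTopology.isTopologicallyNilpotent_of_constantCoeff_zero hτ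
  refine ⟨eval₂Hom (φ := φ) continuous_of_discreteTopology heval, fun r ↦ ?_, ?_⟩
  · rw [coe_eval₂Hom, eval₂_C]
  · rw [coe_eval₂Hom, eval₂_X]

end Substitution

section Exponential

open PowerSeries

variable {A B : Type*} [CommRing A] [Algebra ℚ A] [CommRing B] [Algebra ℚ B]

/-- The power series `e ^ (a z)` in `z`. -/
noncomputable def expSeries (a : A) : A⟦X⟧ :=
  rescale a (exp A)

theorem coeff_expSeries (a : A) (n : ℕ) :
    coeff n (expSeries a) = a ^ n * algebraMap ℚ A (1 / n.factorial) := by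
  rw [expSeries, coeff_rescale, coeff_exp]

theorem constantCoeff_expSeries (a : A) : constantCoeff (expSeries a) = 1 := by
  simp [← coeff_zero_eq_constantCoeff_apply, coeff_expSeries]

theorem expSeries_zero : expSeries (0 : A) = 1 := by
  simp [expSeries]

theorem expSeries_add (a b : A) : expSeries (a + b) = expSeries a * expSeries b :=
  (exp_mul_exp_eq_exp_add a b).symm

theorem expSeries_natCast_mul (k : ℕ) (a : A) : expSeries (k * a) = expSeries a ^ k := by
  induction k with
  | zero => simp [expSeries_zero]
  | succ k ih => rw [Nat.cast_succ, add_mul, one_mul, expSeries_add, ih, pow_succ]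

theorem X_pow_dvd_sum_sub_expSeries (a : A) (M : ℕ) :
    X ^ M ∣ ∑ j ∈ Finset.range M, C (algebraMap ℚ A (1 / j.factorial)) * (C a * X) ^ j -
      expSeries a := by
  refine X_pow_dvd_iff.2 fun n hn ↦ ?_
  simp only [map_sub, map_sum, mul_pow, ← map_pow, coeff_C_mul, coeff_X_pow, mul_ite, mul_one,
    mul_zero, Finset.sum_ite_eq, Finset.mem_range, hn, if_true, coeff_expSeries]
  ring

theorem prod_expSeries {ι : Type*} (s : Finset ι) (a : ι → A) :
    ∏ i ∈ s, expSeries (a i) = expSeries (∑ i ∈ s, a i) := by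
  classical
  induction s using Finset.induction_on with
  | empty => simp [expSeries_zero]
  | insert i s hi ih => rw [Finset.prod_insert hi, Finset.sum_insert hi, expSeries_add, ih]

theorem map_expSeries (φ : A →+* B) (a : A) :
    PowerSeries.map φ (expSeries a) = expSeries (φ a) := by
  ext n
  simp only [coeff_map, coeff_expSeries, map_mul, map_pow, φ.map_rat_algebraMap]

end Exponential

section Parametrisation

open PowerSeries

variable {A B : Type*} [CommRing A] [Algebra ℚ A] [CommRing B] [Algebra ℚ B]

/-- The series `x = w * e ^ (-m (w - 1) z)` parametrising the catalytic variable of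
`intervalSeries`. -/
noncomputable def catalyticParam (m : ℕ) (w : A) : A⟦X⟧ :=
  C w * expSeries (-(m * (w - 1)))

/-- The series `t = z * e ^ (-m (m + 1) z)` parametrising the size variable of
`intervalSeries`. -/
noncomputable def sizeParam (A : Type*) [CommRing A] [Algebra ℚ A] (m : ℕ) : A⟦X⟧ :=
  X * expSeries (-(m * (m + 1)) : A)

theorem constantCoeff_sizeParam (m : ℕ) : constantCoeff (sizeParam A m) = 0 := by
  simp [sizeParam]

/-- The substitution `x ↦ catalyticParam m w`, `t ↦ sizeParam A m`, where `x` is the polynomial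
variable and `t` the power series variable. -/
noncomputable def paramHom (m : ℕ) (w : A) : (Polynomial ℚ)⟦X⟧ →+* A⟦X⟧ :=
  (exists_powerSeries_ringHom (Polynomial.aeval (catalyticParam m w) : _ →ₐ[ℚ] A⟦X⟧).toRingHom
    (constantCoeff_sizeParam m)).choose

theorem paramHom_C (m : ℕ) (w : A) (p : Polynomial ℚ) :
    paramHom m w (C p) = Polynomial.aeval (catalyticParam m w) p :=
  (exists_powerSeries_ringHom _ (constantCoeff_sizeParam m)).choose_spec.1 p

theorem paramHom_X (m : ℕ) (w : A) : paramHom m w X = sizeParam A m :=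
  (exists_powerSeries_ringHom _ (constantCoeff_sizeParam m)).choose_spec.2

theorem X_dvd_paramHom_X (m : ℕ) (w : A) : X ∣ paramHom m w X :=
  paramHom_X m w ▸ dvd_mul_right _ _

theorem map_catalyticParam (m : ℕ) (φ : A →+* B) (w : A) :
    PowerSeries.map φ (catalyticParam m w) = catalyticParam m (φ w) := by
  simp [catalyticParam, map_expSeries]

theorem map_paramHom (m : ℕ) (φ : A →+* B) (w : A) (F : (Polynomial ℚ)⟦X⟧) :
    PowerSeries.map φ (paramHom m w F) = paramHom m (φ w) F := by
  have hX : PowerSeries.map φ (paramHom m w X) = paramHom m (φ w) X := by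
    simp [paramHom_X, sizeParam, map_expSeries]
  refine RingHom.congr_fun (powerSeries_ringHom_ext (f := (PowerSeries.map φ).comp (paramHom m w))
    ?_ (fun p ↦ ?_) hX) F
  · simpa [hX] using X_dvd_paramHom_X m (φ w)
  · rw [RingHom.comp_apply, paramHom_C, paramHom_C, ← map_catalyticParam]
    exact (Polynomial.aeval_algHom_apply (PowerSeries.map φ).toRatAlgHom _ p).symm

theorem paramHom_map_eval {m : ℕ} {a : ℚ} {b : A} (h : catalyticParam m b = algebraMap ℚ A⟦X⟧ a)
    (w : A) (F : (Polynomial ℚ)⟦X⟧) :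
    paramHom m w (PowerSeries.map (Polynomial.C.comp (Polynomial.evalRingHom a)) F) =
      paramHom m b F := by
  refine RingHom.congr_fun (powerSeries_ringHom_ext (f := (paramHom m w).comp (PowerSeries.map
    (Polynomial.C.comp (Polynomial.evalRingHom a)))) ?_ (fun p ↦ ?_) ?_) F
  · simpa using X_dvd_paramHom_X m w
  · simp [paramHom_C, h, Polynomial.aeval_algebraMap_apply]
  · simp [paramHom_X]

theorem catalyticParam_one (m : ℕ) : catalyticParam m (1 : A) = algebraMap ℚ A⟦X⟧ 1 := by
  simp [catalyticParam, expSeries_zero]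

theorem catalyticParam_zero (m : ℕ) : catalyticParam m (0 : A) = algebraMap ℚ A⟦X⟧ 0 := by
  simp [catalyticParam]

/-- The series `(e ^ (a z) - 1) / a`. -/
noncomputable def expSeriesQuotient (a : A) : A⟦X⟧ :=
  X * PowerSeries.mk fun n ↦ algebraMap ℚ A (1 / (n + 1).factorial) * a ^ n

theorem C_mul_expSeriesQuotient (a : A) : C a * expSeriesQuotient a = expSeries a - 1 := by
  ext n
  cases n with
  | zero => simp [expSeriesQuotient, constantCoeff_expSeries]
  | succ n =>
    rw [expSeriesQuotient, coeff_C_mul, coeff_succ_X_mul, coeff_mk, map_sub, coeff_expSeries,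
      coeff_one, if_neg n.succ_ne_zero]
    ring

theorem map_expSeriesQuotient (φ : A →+* B) (a : A) :
    PowerSeries.map φ (expSeriesQuotient a) = expSeriesQuotient (φ a) := by
  simp only [expSeriesQuotient, map_mul, map_X]
  congr 1
  ext n
  simp only [coeff_map, coeff_mk, map_mul, map_pow, φ.map_rat_algebraMap]

/-- The value of `intervalSeries m` under `paramHom m w`: the polynomial form of
`w / (w - 1) * e ^ ((m + w) z) * (x - 1)`, where `x` is `catalyticParam m w`. -/
noncomputable def solutionSeries (m : ℕ) (w : A) : A⟦X⟧ :=
  C w * expSeries (m + w) *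
    (expSeries (-(m * (w - 1))) - m * expSeriesQuotient (-(m * (w - 1))))

theorem map_solutionSeries (m : ℕ) (φ : A →+* B) (w : A) :
    PowerSeries.map φ (solutionSeries m w) = solutionSeries m (φ w) := by
  simp [solutionSeries, map_expSeries, map_expSeriesQuotient]

theorem C_sub_one_mul_solutionSeries (m : ℕ) (w : A) :
    C (w - 1) * solutionSeries m w = C w * expSeries (m + w) * (catalyticParam m w - 1) := by
  have hquot := C_mul_expSeriesQuotient (-(m * (w - 1)) : A)
  simp only [map_neg, map_mul, map_natCast] at hquot
  rw [solutionSeries, catalyticParam]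
  have hC : C w = C (w - 1) + (1 : A⟦X⟧) := by simp
  linear_combination C w * expSeries (m + w) * hquot -
    C w * expSeries (m + w) * expSeries (-(m * (w - 1))) * hC

theorem solutionSeries_one (m : ℕ) :
    solutionSeries m (1 : A) = expSeries (m + 1 : A) * (1 - (m : A⟦X⟧) * X) := by
  have hquot : expSeriesQuotient (0 : A) = X := by
    ext n
    rcases n with _ | _ | n
    all_goals simp [expSeriesQuotient, coeff_X, coeff_succ_X_mul]
  simp [solutionSeries, hquot, expSeries_zero]

end Parametrisation

section KernelMethod

open PowerSeries

theorem paramHom_ascentSeries_zero_zero {A : Type*} [CommRing A] [Algebra ℚ A] (m : ℕ) (w : A) :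
    paramHom m w (ascentSeries m 0 0) = catalyticParam m w := by
  rw [ascentSeries_zero_zero, paramHom_C, Polynomial.aeval_X]

theorem paramHom_ascentSeries_zero_succ {A : Type*} [CommRing A] [Algebra ℚ A] (m j : ℕ) (w : A) :
    paramHom m w (ascentSeries m 0 (j + 1)) =
      catalyticParam m w * (sizeParam A m * paramHom m w (ascentSeries m m j)) := by
  rw [ascentSeries_zero_succ, map_mul, map_mul, paramHom_C, Polynomial.aeval_X, paramHom_X]

theorem sub_one_mul_paramHom_ascentSeries_succ {A : Type*} [CommRing A] [Algebra ℚ A]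
    (m k j : ℕ) (w : A) :
    (catalyticParam m w - 1) * paramHom m w (ascentSeries m (k + 1) j) =
      (paramHom m w (ascentSeries m k j) - paramHom m 1 (ascentSeries m k j)) *
        paramHom m w (intervalSeries m) := by
  have h := congrArg (paramHom m w) (sub_one_mul_ascentSeries_succ m k j)
  simpa [paramHom_C, paramHom_map_eval (catalyticParam_one m)] using h

theorem X_pow_dvd_paramHom_intervalSeries_sub_sum {A : Type*} [CommRing A] [Algebra ℚ A]
    (m M : ℕ) (w : A) :
    X ^ M ∣ paramHom m w (intervalSeries m) - ∑ j ∈ Finset.range M,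
      C (algebraMap ℚ A (1 / j.factorial)) * paramHom m w (ascentSeries m 0 j) := by
  have h := (pow_dvd_pow_of_dvd (X_dvd_paramHom_X m w) M).trans
    ((map_pow (paramHom m w) X M) ▸ map_dvd (paramHom m w) (X_pow_dvd_intervalSeries_sub_sum m M))
  simpa [paramHom_C] using h

variable {K : Type*} [Field K] [CharZero K] {m : ℕ} {u y : K} {s : Finset K}

/-- The series `(x - 1) / F` at the value `1 / (1 - y)` of the parameter of the catalytic variable
`x`, where `F` is `solutionSeries`. -/
noncomputable def kernelNode (m : ℕ) (y : K) : K⟦X⟧ :=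
  C y * expSeries (-(m + (1 - y)⁻¹))

theorem constantCoeff_kernelNode (m : ℕ) (y : K) : constantCoeff (kernelNode m y) = y := by
  simp [kernelNode, constantCoeff_expSeries]

theorem unitDifferences_kernelNode (m : ℕ) (s : Finset K) :
    UnitDifferences s (kernelNode m) := fun y _ y' _ hne ↦ by
  rw [isUnit_iff_constantCoeff, map_sub, constantCoeff_kernelNode, constantCoeff_kernelNode]
  exact (sub_ne_zero.2 hne).isUnit

namespace IsKernelRoots

theorem catalyticParam_eq (h : IsKernelRoots m u s) (hy : y ∈ s) :
    catalyticParam m (1 - y)⁻¹ =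
      C u⁻¹ * expSeries (m * (m + 1) : K) * kernelNode m y ^ m := by
  rw [kernelNode, mul_pow, ← expSeries_natCast_mul, ← map_pow, mul_mul_mul_comm, ← map_mul,
    ← h.inv_one_sub hy, ← expSeries_add, catalyticParam]
  congr 2
  ring

theorem catalyticParam_mul_sizeParam (h : IsKernelRoots m u s) (hy : y ∈ s) :
    catalyticParam m (1 - y)⁻¹ * sizeParam K m = C u⁻¹ * X * kernelNode m y ^ m := by
  have hexp : expSeries (m * (m + 1) : K) * expSeries (-(m * (m + 1)) : K) = 1 := by
    rw [← expSeries_add, add_neg_cancel, expSeries_zero]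
  rw [h.catalyticParam_eq hy, sizeParam]
  linear_combination C u⁻¹ * X * kernelNode m y ^ m * hexp

theorem kernelNode_mul_solutionSeries (h : IsKernelRoots m u s) (hy : y ∈ s) :
    kernelNode m y * solutionSeries m (1 - y)⁻¹ = catalyticParam m (1 - y)⁻¹ - 1 := by
  set w := (1 - y)⁻¹ with hw
  have hCw : IsUnit (C w) := (inv_ne_zero (h.one_sub_ne_zero hy)).isUnit.map C
  have hexp : expSeries (-(m + w)) * expSeries (m + w) = 1 := by
    rw [← expSeries_add, neg_add_cancel, expSeries_zero]
  have hsol := C_sub_one_mul_solutionSeries m w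
  rw [hw, h.inv_one_sub_sub_one hy, ← hw, map_mul] at hsol
  refine hCw.mul_left_cancel ?_
  rw [kernelNode, ← hw]
  linear_combination expSeries (-(m + w)) * hsol + C w * (catalyticParam m w - 1) * hexp

theorem isUnit_catalyticParam_sub_one (h : IsKernelRoots m u s) (hm : m ≠ 0) (hy : y ∈ s) :
    IsUnit (catalyticParam m (1 - y)⁻¹ - 1) := by
  rw [isUnit_iff_constantCoeff, map_sub, catalyticParam, map_mul, constantCoeff_C,
    constantCoeff_expSeries, map_one, mul_one, h.inv_one_sub_sub_one hy]
  exact (mul_ne_zero (h.node_ne_zero hm hy) (inv_ne_zero (h.one_sub_ne_zero hy))).isUnit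

theorem X_pow_dvd_kernelNode_pow_mul_sub (h : IsKernelRoots m u s) (hm : m ≠ 0) (hy : y ∈ s)
    {N : ℕ} (hF : X ^ N ∣ paramHom m (1 - y)⁻¹ (intervalSeries m) - solutionSeries m (1 - y)⁻¹)
    (k j : ℕ) :
    X ^ N ∣ kernelNode m y ^ k * paramHom m (1 - y)⁻¹ (ascentSeries m k j) -
      (paramHom m (1 - y)⁻¹ (ascentSeries m 0 j) -
        ∑ i ∈ Finset.range k, kernelNode m y ^ i * paramHom m 1 (ascentSeries m i j)) := by
  induction k with
  | zero => simp
  | succ k ih =>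
    have hstep : X ^ N ∣ kernelNode m y * paramHom m (1 - y)⁻¹ (ascentSeries m (k + 1) j) -
        (paramHom m (1 - y)⁻¹ (ascentSeries m k j) - paramHom m 1 (ascentSeries m k j)) := by
      refine (h.isUnit_catalyticParam_sub_one hm hy).dvd_mul_left.1 ?_
      convert hF.mul_left (kernelNode m y * (paramHom m (1 - y)⁻¹ (ascentSeries m k j) -
        paramHom m 1 (ascentSeries m k j))) using 1
      linear_combination
        kernelNode m y * sub_one_mul_paramHom_ascentSeries_succ m k j (1 - y)⁻¹ +
        (paramHom m (1 - y)⁻¹ (ascentSeries m k j) - paramHom m 1 (ascentSeries m k j)) *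
          h.kernelNode_mul_solutionSeries hy
    convert (hstep.mul_left (kernelNode m y ^ k)).add ih using 1
    rw [Finset.sum_range_succ]
    ring

variable [DecidableEq K]

theorem X_pow_dvd_dividedDifference_ascentSeries_sub (h : IsKernelRoots m u s) (hm : m ≠ 0)
    {N : ℕ} (hF : ∀ y ∈ s,
      X ^ N ∣ paramHom m (1 - y)⁻¹ (intervalSeries m) - solutionSeries m (1 - y)⁻¹) (j : ℕ) :
    X ^ (N + 1) ∣ dividedDifference s (kernelNode m)
        (fun y ↦ paramHom m (1 - y)⁻¹ (ascentSeries m 0 j)) -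
      (C u⁻¹ * X) ^ j * (C u⁻¹ * expSeries (m * (m + 1) : K)) := by
  have hnodes := unitDifferences_kernelNode m s
  induction j with
  | zero =>
    rw [dividedDifference_congr (g := (C u⁻¹ * expSeries (m * (m + 1) : K)) •
      fun y ↦ kernelNode m y ^ m) fun y hy ↦ by
        rw [paramHom_ascentSeries_zero_zero, h.catalyticParam_eq hy, Pi.smul_apply, smul_eq_mul],
      map_smul, dividedDifference_pow_of_add_one_eq hnodes h.card_eq.symm]
    simp
  | succ j ih =>
    set f : K → K⟦X⟧ := fun y ↦ paramHom m (1 - y)⁻¹ (ascentSeries m 0 j)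
    set g : K → K⟦X⟧ := ∑ i ∈ Finset.range m, paramHom m (1 : K) (ascentSeries m i j) •
      fun y ↦ kernelNode m y ^ i
    have hg : dividedDifference s (kernelNode m) g = 0 := by
      rw [map_sum]
      refine Finset.sum_eq_zero fun i hi ↦ ?_
      have hi' := Finset.mem_range.1 hi
      rw [map_smul, dividedDifference_pow_of_add_one_lt hnodes (by rw [h.card_eq]; omega),
        smul_zero]
    have hrec : X ^ (N + 1) ∣ dividedDifference s (kernelNode m)
        ((fun y ↦ paramHom m (1 - y)⁻¹ (ascentSeries m 0 (j + 1))) - (C u⁻¹ * X) • (f - g)) := by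
      refine dvd_dividedDifference fun y hy ↦ ?_
      obtain ⟨r, hr⟩ := h.X_pow_dvd_kernelNode_pow_mul_sub hm hy (hF y hy) m j
      refine ⟨C u⁻¹ * r, ?_⟩
      simp only [Pi.sub_apply, Pi.smul_apply, smul_eq_mul, f, g, Finset.sum_apply,
        paramHom_ascentSeries_zero_succ]
      simp only [mul_comm (kernelNode m y ^ _) (paramHom m 1 _)] at hr
      linear_combination C u⁻¹ * X * hr +
        paramHom m (1 - y)⁻¹ (ascentSeries m m j) * h.catalyticParam_mul_sizeParam hy
    rw [map_sub, map_smul, map_sub, hg, sub_zero, smul_eq_mul] at hrec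
    convert hrec.add (ih.mul_left (C u⁻¹ * X)) using 1
    ring

theorem X_pow_dvd_dividedDifference_intervalSeries_sub (h : IsKernelRoots m u s) (hm : m ≠ 0)
    {N : ℕ} (hF : ∀ y ∈ s,
      X ^ N ∣ paramHom m (1 - y)⁻¹ (intervalSeries m) - solutionSeries m (1 - y)⁻¹) :
    X ^ (N + 1) ∣ dividedDifference s (kernelNode m)
        (fun y ↦ paramHom m (1 - y)⁻¹ (intervalSeries m)) -
      expSeries u⁻¹ * (C u⁻¹ * expSeries (m * (m + 1) : K)) := by
  set c := C u⁻¹ * expSeries (m * (m + 1) : K)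
  let f (j : ℕ) (y : K) := paramHom m (1 - y)⁻¹ (ascentSeries m 0 j)
  let e (j : ℕ) : K := algebraMap ℚ K (1 / j.factorial)
  have hsum : X ^ (N + 1) ∣ dividedDifference s (kernelNode m)
      ((fun y ↦ paramHom m (1 - y)⁻¹ (intervalSeries m)) -
        ∑ j ∈ Finset.range (N + 1), C (e j) • f j) :=
    dvd_dividedDifference fun y _ ↦ by
      simpa [f, e] using X_pow_dvd_paramHom_intervalSeries_sub_sum m (N + 1) (1 - y)⁻¹
  have hterms : X ^ (N + 1) ∣ ∑ j ∈ Finset.range (N + 1), C (e j) *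
      (dividedDifference s (kernelNode m) (f j) - (C u⁻¹ * X) ^ j * c) :=
    Finset.dvd_sum fun j _ ↦
      (h.X_pow_dvd_dividedDifference_ascentSeries_sub hm hF j).mul_left _
  have hexp := X_pow_dvd_sum_sub_expSeries u⁻¹ (N + 1)
  simp only [map_sub, map_sum, map_smul, smul_eq_mul] at hsum
  simp only [mul_sub, Finset.sum_sub_distrib] at hterms
  convert hsum.add (hterms.add (hexp.mul_right c)) using 1
  rw [sub_mul, Finset.sum_mul]
  simp only [mul_assoc]
  ring

theorem dividedDifference_solutionSeries (h : IsKernelRoots m u s) (hm : m ≠ 0) :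
    dividedDifference s (kernelNode m) (fun y ↦ solutionSeries m (1 - y)⁻¹) =
      expSeries u⁻¹ * (C u⁻¹ * expSeries (m * (m + 1) : K)) := by
  set c := C u⁻¹ * expSeries (m * (m + 1) : K) with hc
  have hnodes := unitDifferences_kernelNode m s
  let a (y : K) : K⟦X⟧ := C y⁻¹ * expSeries (m + (1 - y)⁻¹)
  have ha (y : K) (hy : y ∈ s) : a y * kernelNode m y = 1 := by
    rw [kernelNode, mul_mul_mul_comm, ← map_mul, ← expSeries_add, add_neg_cancel, expSeries_zero,
      inv_mul_cancel₀ (h.node_ne_zero hm hy), map_one, one_mul]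
  have hsol (y : K) (hy : y ∈ s) : solutionSeries m (1 - y)⁻¹ =
      (c • (fun y ↦ kernelNode m y ^ (m - 1)) - a : K → K⟦X⟧) y := by
    have hx := h.catalyticParam_eq hy
    rw [← hc, ← mul_pow_sub_one hm] at hx
    simp only [Pi.sub_apply, Pi.smul_apply, smul_eq_mul]
    linear_combination a y * h.kernelNode_mul_solutionSeries hy + a y * hx -
      (solutionSeries m (1 - y)⁻¹ - c * kernelNode m y ^ (m - 1)) * ha y hy
  have hprod : ∏ y ∈ s, a y = (-1) ^ (m + 1) * (expSeries u⁻¹ * c) := by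
    have hinv : ∏ y ∈ s, y⁻¹ = (-1) ^ (m + 1) * u⁻¹ := by
      rw [Finset.prod_inv_distrib, h.prod_eq_pow_mul hm, mul_inv, ← inv_pow, inv_neg_one]
    rw [Finset.prod_mul_distrib, prod_expSeries, ← map_prod, hinv, Finset.sum_add_distrib,
      h.sum_inv_one_sub, expSeries_add, Finset.sum_const, h.card_eq, nsmul_eq_mul,
      mul_comm _ (m : K), hc, map_mul, map_pow, map_neg, map_one, Nat.cast_add_one]
    ring
  rw [dividedDifference_congr hsol, map_sub, map_smul,
    dividedDifference_pow_of_add_one_lt hnodes (by rw [h.card_eq]; omega), smul_zero,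
    dividedDifference_inverse hnodes (Finset.card_pos.1 (by simp [h.card_eq])) ha, hprod,
    h.card_eq, Nat.add_sub_cancel, zero_sub, ← mul_assoc, ← pow_add, ← add_assoc,
    (Even.add_self m).add_one.neg_one_pow, neg_one_mul, neg_neg]

end IsKernelRoots

end KernelMethod

section Solution

open PowerSeries

variable {K : Type*} [Field K] [CharZero K] {m : ℕ}

theorem map_eval_paramHom_sub_solutionSeries {A : Type*} [CommRing A] [Algebra ℚ A] (m : ℕ)
    (w : A) (F : (Polynomial ℚ)⟦X⟧) :
    PowerSeries.map (Polynomial.evalRingHom w)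
      (paramHom m (Polynomial.X : Polynomial A) F - solutionSeries m Polynomial.X) =
      paramHom m w F - solutionSeries m w := by
  simp [map_paramHom, map_solutionSeries]

theorem IsKernelRoots.dividedDifference_eval_eq_zero [DecidableEq K] {u : K} {s : Finset K}
    (h : IsKernelRoots m u s) (hm : m ≠ 0) {N : ℕ} {E : (Polynomial K)⟦X⟧}
    (hE : paramHom m (Polynomial.X : Polynomial K) (intervalSeries m) -
      solutionSeries m Polynomial.X = X ^ N * E) :
    dividedDifference s id (fun y ↦ (constantCoeff E).eval (1 - y)⁻¹) = 0 := by
  let e (y : K) : K⟦X⟧ := PowerSeries.map (Polynomial.evalRingHom (1 - y)⁻¹) E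
  have he (y : K) : paramHom m (1 - y)⁻¹ (intervalSeries m) - solutionSeries m (1 - y)⁻¹ =
      X ^ N * e y := by
    rw [← map_eval_paramHom_sub_solutionSeries, hE, map_mul, map_pow, map_X]
  have hdvd := h.X_pow_dvd_dividedDifference_intervalSeries_sub hm fun y _ ↦ ⟨e y, he y⟩
  rw [← h.dividedDifference_solutionSeries hm, ← map_sub,
    show _ - _ = (X : K⟦X⟧) ^ N • e from funext he, map_smul, smul_eq_mul, pow_succ,
    mul_dvd_mul_iff_left (pow_ne_zero _ X_ne_zero), X_dvd_iff,
    map_dividedDifference (unitDifferences_kernelNode m s)] at hdvd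
  have hconst (y : K) : constantCoeff (e y) = (constantCoeff E).eval (1 - y)⁻¹ := by
    rw [← coeff_zero_eq_constantCoeff_apply, coeff_map, coeff_zero_eq_constantCoeff_apply,
      Polynomial.coe_evalRingHom]
  simp only [constantCoeff_kernelNode, hconst] at hdvd
  exact hdvd

theorem paramHom_zero_intervalSeries {A : Type*} [CommRing A] [Algebra ℚ A] (m : ℕ) :
    paramHom m (0 : A) (intervalSeries m) = 0 := by
  have hzero : PowerSeries.map (Polynomial.C.comp (Polynomial.evalRingHom (0 : ℚ)))
      (intervalSeries m) = 0 := by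
    ext1 n
    simp [← Polynomial.coeff_zero_eq_eval_zero, coeff_coeff_zero_intervalSeries]
  rw [← paramHom_map_eval (catalyticParam_zero m) 0, hzero, map_zero]

theorem paramHom_X_intervalSeries [IsAlgClosed K] (hm : m ≠ 0) :
    paramHom m (Polynomial.X : Polynomial K) (intervalSeries m) =
      solutionSeries m Polynomial.X := by
  classical
  set D := paramHom m (Polynomial.X : Polynomial K) (intervalSeries m) -
    solutionSeries m Polynomial.X with hD
  have hD_zero : PowerSeries.map (Polynomial.evalRingHom 0) D = 0 := by
    rw [hD, map_eval_paramHom_sub_solutionSeries, paramHom_zero_intervalSeries]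
    simp [solutionSeries]
  have hcoeff (N : ℕ) (hN : X ^ N ∣ D) : coeff N D = 0 := by
    obtain ⟨E, hE⟩ := hN
    refine eq_zero_of_forall_dividedDifference_eq_zero hm ?_ fun u s hs ↦ ?_
    · simpa [Polynomial.coeff_zero_eq_eval_zero] using congrArg (coeff N) hD_zero
    · have hconst : coeff N D = constantCoeff E := by
        rw [hE, coeff_X_pow_mul', if_pos le_rfl, Nat.sub_self, coeff_zero_eq_constantCoeff]
      exact hconst ▸ hs.dividedDifference_eval_eq_zero hm hE
  refine sub_eq_zero.1 (PowerSeries.ext fun N ↦ ?_)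
  induction N using Nat.strong_induction_on with
  | _ N ih => exact hcoeff N (X_pow_dvd_iff.2 fun n hn ↦ ih n hn)

theorem paramHom_one_intervalSeries (hm : m ≠ 0) :
    paramHom m (1 : ℚ) (intervalSeries m) = solutionSeries m 1 := by
  refine PowerSeries.map_injective (algebraMap ℚ ℂ) (algebraMap ℚ ℂ).injective ?_
  rw [map_paramHom, map_solutionSeries, map_one, ← sub_eq_zero,
    ← map_eval_paramHom_sub_solutionSeries, paramHom_X_intervalSeries hm, sub_self, map_zero]

end Solution

section CoefficientExtraction

open PowerSeries

theorem sizeParam_pow (m n : ℕ) :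
    sizeParam ℚ m ^ n = X ^ n * expSeries (n * -(m * (m + 1)) : ℚ) := by
  rw [sizeParam, mul_pow, expSeries_natCast_mul]

theorem X_pow_dvd_paramHom_map_C_sub_sum (m M : ℕ) (w : ℚ) (G : ℚ⟦X⟧) :
    X ^ M ∣ paramHom m w (PowerSeries.map Polynomial.C G) -
      ∑ n ∈ Finset.range M, C (coeff n G) * sizeParam ℚ m ^ n := by
  have hG : X ^ M ∣ G - ∑ n ∈ Finset.range M, C (coeff n G) * X ^ n :=
    X_pow_dvd_iff.2 fun n hn ↦ by simp [coeff_X_pow, hn]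
  have h := map_dvd ((paramHom m w).comp (PowerSeries.map Polynomial.C)) hG
  rw [map_pow, RingHom.comp_apply, map_X] at h
  have h := (pow_dvd_pow_of_dvd (X_dvd_paramHom_X m w) M).trans h
  simpa [paramHom_C, paramHom_X] using h

theorem coeff_paramHom_map_C_mul (m N : ℕ) (w : ℚ) (G ψ : ℚ⟦X⟧) :
    coeff N (paramHom m w (PowerSeries.map Polynomial.C G) * ψ) =
      ∑ n ∈ Finset.range (N + 1), coeff n G * coeff N (sizeParam ℚ m ^ n * ψ) := by
  have h := X_pow_dvd_iff.1 ((X_pow_dvd_paramHom_map_C_sub_sum m (N + 1) w G).mul_right ψ) N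
    N.lt_succ_self
  simpa [sub_mul, Finset.sum_mul, mul_assoc, sub_eq_zero] using h

theorem paramHom_map_C_injective (m : ℕ) (w : ℚ) :
    Function.Injective fun G : ℚ⟦X⟧ ↦ paramHom m w (PowerSeries.map Polynomial.C G) := by
  refine fun G H hGH ↦ PowerSeries.ext fun N ↦ ?_
  induction N using Nat.strong_induction_on with
  | _ N ih =>
    have h := congrArg (coeff N <| · * 1) hGH
    simp only [coeff_paramHom_map_C_mul, Finset.sum_range_succ] at h
    rw [Finset.sum_congr rfl fun n hn ↦ by rw [ih n (Finset.mem_range.1 hn)]] at h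
    simpa [sizeParam_pow, coeff_X_pow_mul', constantCoeff_expSeries] using h

theorem sum_neg_one_pow_choose_mul_eval_eq_zero {R : Type*} [CommRing R] {P : Polynomial R} {N : ℕ}
    (hP : P.natDegree < N) :
    ∑ n ∈ Finset.range (N + 1), (-1) ^ (N - n) * (N.choose n : R) * P.eval (n : R) = 0 := by
  have h := congrFun (Polynomial.fwdDiff_iter_eq_zero_of_degree_lt hP) 0
  rw [fwdDiff_iter_eq_sum_shift] at h
  simpa using h

theorem sum_neg_one_pow_choose_mul_zpow (m N : ℕ) :
    ∑ n ∈ Finset.range (N + 1),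
      (-1) ^ (N - n) * (N.choose n : ℚ) * (m * n + 1 : ℚ) ^ ((N : ℤ) - 2) =
      if N = 0 then 1 else if N = 1 then -(m / (m + 1) : ℚ) else 0 := by
  rcases N with _ | _ | N
  · simp
  · have hsum : -1 + (m + 1 : ℚ)⁻¹ = -(m / (m + 1)) := by
      field_simp
      ring
    simpa [Finset.sum_range_succ] using hsum
  · rw [if_neg (by omega), if_neg (by omega)]
    let P : Polynomial ℚ := (Polynomial.C (m : ℚ) * Polynomial.X + 1) ^ N
    have hP : P.natDegree < N + 1 + 1 := by
      have : P.natDegree ≤ N := by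
        unfold P
        compute_degree!
      omega
    have hexponent : ((N + 1 + 1 : ℕ) : ℤ) - 2 = N := by push_cast; ring
    simp only [hexponent, zpow_natCast]
    simpa [P] using sum_neg_one_pow_choose_mul_eval_eq_zero hP

/-- The exponential generating series of the numbers `(m + 1) ^ n * (m * n + 1) ^ (n - 2)`. -/
noncomputable def countSeries (m : ℕ) : ℚ⟦X⟧ :=
  PowerSeries.mk fun n ↦ (m + 1 : ℚ) ^ n * (m * n + 1 : ℚ) ^ ((n : ℤ) - 2) / n.factorial

theorem coeff_countSeries_mul_coeff_sizeParam_pow_mul (m : ℕ) {n N : ℕ} (hn : n ≤ N) :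
    coeff n (countSeries m) * coeff N (sizeParam ℚ m ^ n * expSeries (-(m + 1) : ℚ)) =
      (m + 1 : ℚ) ^ N / N.factorial *
        ((-1) ^ (N - n) * (N.choose n : ℚ) * (m * n + 1 : ℚ) ^ ((N : ℤ) - 2)) := by
  have hbase : (m * n + 1 : ℚ) ≠ 0 := by positivity
  have hexponent : (n * -(m * (m + 1)) + -(m + 1) : ℚ) = -1 * (m + 1) * (m * n + 1) := by ring
  have hzpow : (m * n + 1 : ℚ) ^ ((N : ℤ) - 2) =
      (m * n + 1 : ℚ) ^ ((n : ℤ) - 2) * (m * n + 1 : ℚ) ^ (N - n) := by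
    rw [← zpow_natCast, ← zpow_add₀ hbase, Nat.cast_sub hn]
    congr 1
    ring
  rw [countSeries, coeff_mk, sizeParam_pow, mul_assoc, ← expSeries_add, coeff_X_pow_mul',
    if_pos hn, coeff_expSeries, hexponent, Nat.cast_choose ℚ hn, hzpow, mul_pow, mul_pow,
    ← pow_mul_pow_sub (m + 1 : ℚ) hn, Algebra.algebraMap_self, RingHom.id_apply]
  have := N.factorial_ne_zero
  field_simp

theorem paramHom_map_C_countSeries_mul_expSeries (m : ℕ) (w : ℚ) :
    paramHom m w (PowerSeries.map Polynomial.C (countSeries m)) * expSeries (-(m + 1) : ℚ) =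
      1 - (m : ℚ⟦X⟧) * X := by
  ext N
  rw [coeff_paramHom_map_C_mul, Finset.sum_congr rfl fun n hn ↦
    coeff_countSeries_mul_coeff_sizeParam_pow_mul m (Finset.mem_range_succ_iff.1 hn),
    ← Finset.mul_sum, sum_neg_one_pow_choose_mul_zpow, ← map_natCast (C (R := ℚ)) m, map_sub,
    coeff_C_mul, coeff_one, coeff_X]
  rcases N with _ | _ | N
  · simp
  · have hne : (m + 1 : ℚ) ≠ 0 := by positivity
    simpa using mul_div_cancel₀ (m : ℚ) hne
  · simp

theorem map_eval_one_intervalSeries {m : ℕ} (hm : m ≠ 0) :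
    PowerSeries.map (Polynomial.evalRingHom 1) (intervalSeries m) = countSeries m := by
  refine paramHom_map_C_injective m 1 ?_
  have hexp : expSeries (-(m + 1) : ℚ) * expSeries (m + 1 : ℚ) = 1 := by
    rw [← expSeries_add, neg_add_cancel, expSeries_zero]
  have hinterval := paramHom_map_eval (catalyticParam_one m) (1 : ℚ) (intervalSeries m)
  rw [paramHom_one_intervalSeries hm, solutionSeries_one,
    ← paramHom_map_C_countSeries_mul_expSeries m 1, PowerSeries.map_comp] at hinterval
  linear_combination hinterval +
    paramHom m (1 : ℚ) (PowerSeries.map Polynomial.C (countSeries m)) * hexp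

end CoefficientExtraction

/-- **(F. Bergeron's conjecture; Bousquet-Mélou, Chapuy, Préville-Ratelle.)**
Fix `m ≥ 1` and `n ≥ 1`.  The number of labelled `m`-Tamari intervals of size `n`
equals `(m+1)^n (mn+1)^{n−2}`, an identity in `ℚ`. -/
theorem card_labelled_tamari_intervals (m n : ℕ) (hm : 1 ≤ m) (hn : 1 ≤ n) :
    (Nat.card {x : (List Step × List Step) × (Fin n → ℕ) //
        IsLabelledTamariInterval m n x} : ℚ)
      = (m + 1 : ℚ) ^ n * (m * n + 1 : ℚ) ^ ((n : ℤ) - 2) := by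
  have hcoeff := congrArg (PowerSeries.coeff n) (map_eval_one_intervalSeries (m := m) (by omega))
  rw [PowerSeries.coeff_map, Polynomial.coe_evalRingHom, countSeries, PowerSeries.coeff_mk]
    at hcoeff
  rw [card_labelledTamariInterval, hcoeff, mul_div_cancel₀ _ (by positivity)]
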